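/- arXiv:1802.06484 — 3 statements merged into one kernel-verified Lean document; each statement's English description precedes it below -/
import Mathlib

section
/- Let A and B be two disjoint finite sets in the plane, each of size k, with A ∪ B in general position, such that A and B are mutually avoiding. Then there exists a bijection f : A → B such that the k closed segments [a, f(a)], for a ∈ A, pairwise cross (any two of them have intersecting relative interiors and share no endpoint). -/
noncomputable section

abbrev Plane : Type := EuclideanSpace ℝ (Fin 2)

/-- A set of points in the plane is in general position if no three of its points
are collinear. -/
def GenPos2 (P : Set Plane) : Prop :=
  ∀ a ∈ P, ∀ b ∈ P, ∀ c ∈ P, a ≠ b → a ≠ c → b ≠ c →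
    ¬ Collinear ℝ ({a, b, c} : Set Plane)

/-- `A` avoids `B` if no line through two distinct points of `A` meets the convex
hull of `B`. -/
def Avoids2 (A B : Set Plane) : Prop :=
  ∀ a ∈ A, ∀ a' ∈ A, a ≠ a' →
    Disjoint ((affineSpan ℝ ({a, a'} : Set Plane) : AffineSubspace ℝ Plane) : Set Plane)
      (convexHull ℝ B)

def MutuallyAvoiding2 (A B : Set Plane) : Prop := Avoids2 A B ∧ Avoids2 B A

/-!
Each of `A` and `B` orders the other: say that `a` precedes `a'` when `B` lies to the left of the
directed line from `a` to `a'`. Since `A` avoids `B`, any two points of `A` are comparable. Since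
`B` avoids `A`, the set `A` lies in an open half-plane bounded by a line through two points of `B`,
so the directions from a point of `B` to the points of `A` span less than a half-turn and the
relation is transitive. Match `A` with `B` by the order isomorphism. If `a` precedes `a'`, then both
`f a` and `f a'` are to the left of the line from `a` to `a'`, and both `a` and `a'` are to the left
of the line from `f a` to `f a'`, which makes `[a, f a]` and `[a', f a']` the diagonals of a convex
quadrilateral.
-/

section FiniteOrders

variable {α β : Type*}

lemma nonempty_relIso_of_card_eq [Fintype α] [Fintype β] (r : α → α → Prop) (s : β → β → Prop)
    [IsStrictTotalOrder α r] [IsStrictTotalOrder β s] (hcard : Fintype.card α = Fintype.card β) :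
    Nonempty (r ≃r s) := by
  classical
  let := linearOrderOfSTO r
  let := linearOrderOfSTO s
  exact ⟨((Fintype.orderIsoFinOfCardEq α hcard).symm.trans
    (Fintype.orderIsoFinOfCardEq β rfl)).toRelIsoLT⟩

lemma exists_bijOn_extending_equiv {s t : Set α} (g : s ≃ t) :
    ∃ f : α → α, Set.BijOn f s t ∧ ∀ a : s, f a = g a := by
  have hext (a : s) : Function.extend Subtype.val (Subtype.val ∘ g) id (a : α) = g a :=
    Subtype.val_injective.extend_apply _ _ a
  refine ⟨_, ⟨fun a ha => ?_, fun a ha a' ha' h => ?_, fun b hb => ?_⟩, hext⟩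
  · exact hext ⟨a, ha⟩ ▸ (g ⟨a, ha⟩).2
  · rw [hext ⟨a, ha⟩, hext ⟨a', ha'⟩] at h
    exact congrArg Subtype.val (g.injective (Subtype.val_injective h))
  · exact ⟨g.symm ⟨b, hb⟩, Subtype.prop _, by rw [hext, g.apply_symm_apply]⟩

end FiniteOrders

section SignedArea

variable {R M : Type*} [CommRing R] [AddCommGroup M] [Module R M] (e : Module.Basis (Fin 2) R M)

/-- Twice the signed area of the triangle `p q r`, in the coordinates of the basis `e`. It is
positive when `r` lies to the left of the directed line from `p` to `q`. -/
def signedArea (p q r : M) : R :=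
  e.repr (q - p) 0 * e.repr (r - p) 1 - e.repr (q - p) 1 * e.repr (r - p) 0

lemma signedArea_self_left (p r : M) : signedArea e p p r = 0 := by
  simp [signedArea]

lemma signedArea_swap_left (p q r : M) : signedArea e q p r = -signedArea e p q r := by
  simp only [signedArea, map_sub, Finsupp.sub_apply]
  ring

lemma signedArea_lineMap (p q r s : M) (t : R) :
    signedArea e p q (AffineMap.lineMap r s t) =
      AffineMap.lineMap (signedArea e p q r) (signedArea e p q s) t := by
  simp only [signedArea, AffineMap.lineMap_apply_module, map_sub, map_add, map_smul,
    Finsupp.sub_apply, Finsupp.add_apply, Finsupp.smul_apply, smul_eq_mul]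
  ring

-- The Plücker relation between the vectors `q - p`, `u - p`, `v - p` and `w - p`.
lemma signedArea_mul_signedArea (p q u v w : M) :
    signedArea e p q v * signedArea e u w p =
      signedArea e p q u * signedArea e v w p + signedArea e p q w * signedArea e u v p := by
  simp only [signedArea, map_sub, Finsupp.sub_apply]
  ring

lemma signedArea_add_signedArea (a a' b b' : M) :
    signedArea e b b' a + signedArea e a a' b = signedArea e b b' a' + signedArea e a a' b' := by
  simp only [signedArea, map_sub, Finsupp.sub_apply]
  ring

-- Both sides are a multiple of the intersection point of the lines `a b` and `a' b'`.
lemma signedArea_smul_add_smul (a a' b b' : M) :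
    signedArea e b b' a' • a + signedArea e a a' b' • b =
      signedArea e b b' a • a' + signedArea e a a' b • b' := by
  refine e.ext_elem (Fin.forall_fin_two.2 ⟨?_, ?_⟩) <;>
  · simp only [signedArea, map_sub, map_add, map_smul, Finsupp.sub_apply, Finsupp.add_apply,
      Finsupp.smul_apply, smul_eq_mul]
    ring

end SignedArea

section Sides

variable {K V : Type*} [Field K] [AddCommGroup V] [Module K V] (e : Module.Basis (Fin 2) K V)

lemma mem_affineSpan_pair_of_signedArea_eq_zero {p q r : V} (hpq : p ≠ q)
    (hr : signedArea e p q r = 0) : r ∈ line[K, p, q] := by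
  obtain ⟨i, hi⟩ : ∃ i, e.repr (q - p) i ≠ 0 := by
    by_contra! h
    exact sub_ne_zero.2 hpq.symm (e.ext_elem fun i => by simpa using h i)
  have hcoord (j : Fin 2) :
      e.repr (r - p) i * e.repr (q - p) j = e.repr (q - p) i * e.repr (r - p) j := by
    rw [signedArea, sub_eq_zero] at hr
    fin_cases i <;> fin_cases j <;> grind
  have hline : r = AffineMap.lineMap p q (e.repr (r - p) i / e.repr (q - p) i) := by
    rw [AffineMap.lineMap_apply, vsub_eq_sub, vadd_eq_add, ← sub_eq_iff_eq_add]
    refine e.ext_elem fun j => ?_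
    rw [map_smul, Finsupp.smul_apply, smul_eq_mul, div_mul_eq_mul_div, hcoord,
      mul_div_cancel_left₀ _ hi]
  exact hline ▸ AffineMap.lineMap_mem_affineSpan_pair _ p q

variable [LinearOrder K] [IsStrictOrderedRing K]

lemma exists_mem_segment_signedArea_eq_zero {p q r s : V}
    (h : signedArea e p q r * signedArea e p q s ≤ 0) :
    ∃ z ∈ segment K r s, signedArea e p q z = 0 := by
  have hzero : (0 : K) ∈ segment K (signedArea e p q r) (signedArea e p q s) := by
    rw [segment_eq_uIcc, Set.mem_uIcc]
    exact (mul_nonpos_iff.1 h).symm.imp_right And.symm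
  rw [segment_eq_image_lineMap] at hzero ⊢
  obtain ⟨t, ht, hzero⟩ := hzero
  exact ⟨_, Set.mem_image_of_mem _ ht, (signedArea_lineMap e p q r s t).trans hzero⟩

lemma openSegment_inter_nonempty_of_signedArea_pos {a a' b b' : V}
    (hb : 0 < signedArea e a a' b) (hb' : 0 < signedArea e a a' b')
    (ha : 0 < signedArea e b b' a) (ha' : 0 < signedArea e b b' a') :
    (openSegment K a b ∩ openSegment K a' b').Nonempty := by
  set S := signedArea e b b' a' + signedArea e a a' b' with hS
  have hS' : signedArea e b b' a + signedArea e a a' b = S := signedArea_add_signedArea e a a' b b'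
  have hpos : 0 < S := add_pos ha' hb'
  refine ⟨S⁻¹ • (signedArea e b b' a' • a + signedArea e a a' b' • b), ?_, ?_⟩
  · refine ⟨S⁻¹ * signedArea e b b' a', S⁻¹ * signedArea e a a' b', by positivity, by positivity,
      ?_, ?_⟩
    · rw [← mul_add, ← hS, inv_mul_cancel₀ hpos.ne']
    · rw [smul_add, mul_smul, mul_smul]
  · refine ⟨S⁻¹ * signedArea e b b' a, S⁻¹ * signedArea e a a' b, by positivity, by positivity,
      ?_, ?_⟩
    · rw [← mul_add, hS', inv_mul_cancel₀ hpos.ne']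
    · rw [signedArea_smul_add_smul, smul_add, mul_smul, mul_smul]

end Sides

section Avoiding

variable {K V : Type*} [Field K] [LinearOrder K] [AddCommGroup V] [Module K V]

variable (K) in
/-- `Avoids2` in an arbitrary vector space: no line through two distinct points of `A` meets the
convex hull of `B`. -/
def Avoids (A B : Set V) : Prop :=
  ∀ a ∈ A, ∀ a' ∈ A, a ≠ a' → Disjoint (line[K, a, a'] : Set V) (convexHull K B)

lemma Avoids.notMem {A B : Set V} (hAB : Avoids K A B) {a a' : V} (ha : a ∈ A) (ha' : a' ∈ A)
    (hne : a ≠ a') : a ∉ B := fun hB =>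
  Set.disjoint_left.1 (hAB a ha a' ha' hne) (left_mem_affineSpan_pair K a a')
    (subset_convexHull K B hB)

variable (e : Module.Basis (Fin 2) K V)

/-- `B` lies strictly to the left of the directed line from `a` to `a'`. When `A` and `B` avoid
each other, this orders `A` by the direction in which its points are seen from `B`. -/
def Precedes (B : Set V) (a a' : V) : Prop := ∀ b ∈ B, 0 < signedArea e a a' b

variable {e}

lemma not_precedes_self {B : Set V} (hB : B.Nonempty) (a : V) : ¬ Precedes e B a a := by
  obtain ⟨b, hb⟩ := hB
  exact fun h => (h b hb).ne' (signedArea_self_left e a b)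

variable [IsStrictOrderedRing K]

variable (e) in
lemma Avoids.signedArea_mul_pos {A B : Set V} (hAB : Avoids K A B) {a a' b b' : V} (ha : a ∈ A)
    (ha' : a' ∈ A) (hne : a ≠ a') (hb : b ∈ B) (hb' : b' ∈ B) :
    0 < signedArea e a a' b * signedArea e a a' b' := by
  by_contra! hle
  obtain ⟨z, hz, hzero⟩ := exists_mem_segment_signedArea_eq_zero e hle
  exact Set.disjoint_left.1 (hAB a ha a' ha' hne)
    (mem_affineSpan_pair_of_signedArea_eq_zero e hne hzero)
    (segment_subset_convexHull hb hb' hz)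

variable (e) in
lemma Avoids.precedes_or_precedes {A B : Set V} (hAB : Avoids K A B) {a a' : V} (ha : a ∈ A)
    (ha' : a' ∈ A) (hne : a ≠ a') : Precedes e B a a' ∨ Precedes e B a' a := by
  by_contra! h
  simp only [Precedes, not_forall, not_lt, signedArea_swap_left e a a', neg_nonpos] at h
  obtain ⟨⟨b, hb, hle⟩, b', hb', hge⟩ := h
  exact (hAB.signedArea_mul_pos e ha ha' hne hb hb').not_ge (mul_nonpos_of_nonpos_of_nonneg hle hge)

lemma Precedes.trans {A B : Set V} (hBA : Avoids K B A) (hB : B.Nontrivial) {u v w : V}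
    (hu : u ∈ A) (hv : v ∈ A) (hw : w ∈ A) (huv : Precedes e B u v) (hvw : Precedes e B v w) :
    Precedes e B u w := by
  intro b hb
  obtain ⟨b', hb', hne⟩ := hB.exists_ne b
  have same_side {x : V} (hx : x ∈ A) : 0 < signedArea e b b' v * signedArea e b b' x :=
    hBA.signedArea_mul_pos e hb hb' hne.symm hv hx
  have hpos : 0 < signedArea e b b' v * signedArea e b b' v * signedArea e u w b :=
    calc
      0 < signedArea e b b' v * signedArea e b b' u * signedArea e v w b +
          signedArea e b b' v * signedArea e b b' w * signedArea e u v b :=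
        add_pos (mul_pos (same_side hu) (hvw b hb)) (mul_pos (same_side hw) (huv b hb))
      _ = signedArea e b b' v * signedArea e b b' v * signedArea e u w b := by
        rw [mul_assoc _ _ (signedArea e u w b), signedArea_mul_signedArea]
        ring
  exact pos_of_mul_pos_right hpos (same_side hv).le

variable (e) in
lemma isStrictTotalOrder_precedes {A B : Finset V} (hcard : A.card = B.card)
    (hAB : Avoids K (A : Set V) B) (hBA : Avoids K (B : Set V) A) :
    IsStrictTotalOrder A fun a a' => Precedes e (B : Set V) a a' := by
  have irrefl (a : A) : ¬ Precedes e (B : Set V) a a :=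
    not_precedes_self (Finset.card_pos.1 (hcard ▸ Finset.card_pos.2 ⟨a, a.2⟩)) _
  refine { trichotomous := fun a a' h h' => ?_, irrefl, trans := fun u v w huv hvw => ?_ }
  · by_contra hne
    exact (hAB.precedes_or_precedes e a.2 a'.2 (Subtype.coe_ne_coe.2 hne)).elim h h'
  · have hne : (u : V) ≠ v := fun h => irrefl v (h ▸ huv)
    have hA : A.Nontrivial := ⟨u, u.2, v, v.2, hne⟩
    have hB : B.Nontrivial := by rwa [← Finset.one_lt_card_iff_nontrivial, ← hcard,
      Finset.one_lt_card_iff_nontrivial]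
    exact huv.trans hBA hB u.2 v.2 w.2 hvw

lemma Precedes.openSegment_inter_nonempty {A B : Set V} {a a' b b' : V} (ha : a ∈ A)
    (ha' : a' ∈ A) (hb : b ∈ B) (hb' : b' ∈ B) (haa' : Precedes e B a a')
    (hbb' : Precedes e A b b') : (openSegment K a b ∩ openSegment K a' b').Nonempty :=
  openSegment_inter_nonempty_of_signedArea_pos e (haa' b hb) (haa' b' hb') (hbb' a ha) (hbb' a' ha')

variable (e) in
lemma exists_bijOn_precedes {A B : Finset V} (hcard : A.card = B.card)
    (hAB : Avoids K (A : Set V) B) (hBA : Avoids K (B : Set V) A) :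
    ∃ f : V → V, Set.BijOn f A B ∧ ∀ a ∈ A, ∀ a' ∈ A,
      Precedes e (B : Set V) a a' → Precedes e (A : Set V) (f a) (f a') := by
  have := isStrictTotalOrder_precedes e hcard hAB hBA
  have := isStrictTotalOrder_precedes e hcard.symm hBA hAB
  obtain ⟨g⟩ := nonempty_relIso_of_card_eq (fun a a' : A => Precedes e (B : Set V) a a')
    (fun b b' : B => Precedes e (A : Set V) b b') (by simpa using hcard)
  obtain ⟨f, hf, hfg⟩ :=
    exists_bijOn_extending_equiv (show (A : Set V) ≃ (B : Set V) from g.toEquiv)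
  refine ⟨f, hf, fun a ha a' ha' h => ?_⟩
  rw [hfg ⟨a, ha⟩, hfg ⟨a', ha'⟩]
  exact g.map_rel_iff.2 h

theorem mutually_avoiding_gives_crossing_family_general (hdim : Module.finrank K V = 2)
    {A B : Finset V} (hcard : A.card = B.card) (hAB : Avoids K (A : Set V) B)
    (hBA : Avoids K (B : Set V) A) :
    ∃ f : V → V, Set.BijOn f A B ∧ ∀ a ∈ A, ∀ a' ∈ A, a ≠ a' →
      (openSegment K a (f a) ∩ openSegment K a' (f a')).Nonempty ∧
      ({a, f a} : Set V) ∩ {a', f a'} = ∅ := by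
  have : FiniteDimensional K V := Module.finite_of_finrank_pos (by lia)
  let e : Module.Basis (Fin 2) K V := Module.finBasisOfFinrankEq K V hdim
  obtain ⟨f, hf, hmono⟩ := exists_bijOn_precedes e hcard hAB hBA
  have cross {a a' : V} (ha : a ∈ A) (ha' : a' ∈ A) (h : Precedes e (B : Set V) a a') :
      (openSegment K a (f a) ∩ openSegment K a' (f a')).Nonempty :=
    h.openSegment_inter_nonempty ha ha' (hf.mapsTo ha) (hf.mapsTo ha') (hmono a ha a' ha' h)
  refine ⟨f, hf, fun a ha a' ha' hne => ⟨?_, ?_⟩⟩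
  · rcases hAB.precedes_or_precedes e ha ha' hne with h | h
    · exact cross ha ha' h
    · exact Set.inter_comm _ _ ▸ cross ha' ha h
  · have ha_ne : a ≠ f a' := fun h => hAB.notMem ha ha' hne (h ▸ hf.mapsTo ha')
    have ha'_ne : f a ≠ a' := fun h => hAB.notMem ha' ha hne.symm (h ▸ hf.mapsTo ha)
    have hf_ne : f a ≠ f a' := hf.injOn.ne ha ha' hne
    simp [← Set.disjoint_iff_inter_eq_empty, hne.symm, ha_ne.symm, ha'_ne.symm, hf_ne.symm]

end Avoiding

/-- Two disjoint mutually avoiding sets of size `k` each, with union in general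
position, yield a perfect matching between them whose `k` segments pairwise cross. -/
theorem mutually_avoiding_gives_crossing_family (k : ℕ) (A B : Finset Plane)
    (hA : A.card = k) (hB : B.card = k) (hdisj : Disjoint A B)
    (hgp : GenPos2 ((A : Set Plane) ∪ (B : Set Plane)))
    (hav : MutuallyAvoiding2 (A : Set Plane) (B : Set Plane)) :
    ∃ f : Plane → Plane, Set.BijOn f (A : Set Plane) (B : Set Plane) ∧
      ∀ a ∈ A, ∀ a' ∈ A, a ≠ a' →
        (openSegment ℝ a (f a) ∩ openSegment ℝ a' (f a')).Nonempty ∧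
        ({a, f a} : Set Plane) ∩ {a', f a'} = ∅ := by
  exact mutually_avoiding_gives_crossing_family_general finrank_euclideanSpace_fin
    (hA.trans hB.symm) hav.1 hav.2
end
end

section
/- For every integer k ≥ 1 and every set P of n points in the plane in general position with n > 12(40k+1)², there exist pairwise disjoint subsets A₁, …, A_k, B₁, …, B_k ⊆ P, each of size at least n/(1320k)⁴, such that for every choice of points a₁ ∈ A₁, …, a_k ∈ A_k and b₁ ∈ B₁, …, b_k ∈ B_k, the sets {a₁, …, a_k} and {b₁, …, b_k} are mutually avoiding. -/
noncomputable section

/-!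
In coordinates with `x` injective on `P`, cut `P` by `x` into four blocks and thin them out along
lines that split two blocks evenly, until any three of them form a cup or a cap: the middle one
lies below, or above, all lines through the outer two.

Each block of such a triple sees the other two separated by a pencil of lines (parallel ones for
the middle block). Order the block by `x` and by position in the pencil. An Erdős–Szekeres argument
on a grid of cells gives `k` large clusters on which the two orders agree, or `k` on which they are
opposite. The lines between different clusters then miss everything seen on one side of the pencil
in the first case, and everything seen on the other side in the second.

The order in which a block sees the other three is transitive. This constrains the signs of the
four triples so much that the blocks can be matched in pairs with each one seeing its partner first
or last. Hence every block has clusters avoiding its partner, or clusters avoiding either of the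
other two blocks, and in all cases some two blocks avoid each other mutually.
-/

open Finset

/-! ### Chains, antichains and clusters -/

theorem exists_isChain_or_isAntichain {β : Type*} [PartialOrder β] (p q : ℕ) (C : Finset β)
    (h : p * q < #C) :
    (∃ D ⊆ C, #D = p + 1 ∧ IsChain (· ≤ ·) (D : Set β)) ∨
      ∃ D ⊆ C, #D = q + 1 ∧ IsAntichain (· ≤ ·) (D : Set β) := by
  classical
  induction p generalizing C with
  | zero =>
    obtain ⟨a, ha⟩ : C.Nonempty := card_pos.1 (by lia)
    exact .inl ⟨{a}, by simpa using ha, by simp, by simp⟩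
  | succ p ih =>
    -- The minimal elements either contain a long antichain, or extend a chain among the others.
    set M := {a ∈ C | Minimal (· ∈ C) a}
    have hM_anti : IsAntichain (· ≤ ·) (M : Set β) :=
      (setOfPred_minimal_antichain (· ∈ C)).subset fun a ha => (mem_filter.1 ha).2
    by_cases hq : q + 1 ≤ #M
    · obtain ⟨D, hDM, hD⟩ := exists_subset_card_eq hq
      exact .inr ⟨D, hDM.trans (filter_subset _ _), hD, hM_anti.subset (mod_cast hDM)⟩
    have hcard : p * q < #(C \ M) := by
      rw [card_sdiff_of_subset (filter_subset _ _)]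
      lia
    refine (ih _ hcard).imp ?_ fun ⟨D, hDC, hD⟩ => ⟨D, hDC.trans sdiff_subset, hD⟩
    rintro ⟨D, hDC, hD, hchain⟩
    obtain ⟨d, hd⟩ := D.exists_minimal (card_pos.1 (by lia))
    obtain ⟨b, hbd, hb⟩ := C.exists_le_minimal (mem_sdiff.1 (hDC hd.1)).1
    have hbD : b ∉ D := fun h => (mem_sdiff.1 (hDC h)).2 (mem_filter.2 ⟨hb.1, hb⟩)
    have hd_le : ∀ z ∈ D, d ≤ z := fun z hz =>
      (hchain.total hd.1 hz).elim id fun hzd => hd.2 hz hzd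
    refine ⟨insert b D, insert_subset hb.1 (hDC.trans sdiff_subset), ?_, ?_⟩
    · rw [card_insert_of_notMem hbD, hD]
    · rw [coe_insert]
      exact hchain.insert fun z hz _ => .inl (hbd.trans (hd_le z hz))

section Blocks

variable {α β : Type*} [LinearOrder β]

theorem exists_rank (G : α → β) (T : Finset α) :
    ∃ r : α → ℕ, Set.BijOn r T (Set.Iio #T) ∧ ∀ a ∈ T, ∀ b ∈ T, r a ≤ r b → G a ≤ G b := by
  classical
  let e : T ≃ Fin #T :=
    T.equivFin.trans (Tuple.sort fun i => G (T.equivFin.symm i)).symm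
  have he : ∀ a b : T, e a ≤ e b → G a ≤ G b := fun a b hab => by
    simpa [e] using Tuple.monotone_sort (fun i => G (T.equivFin.symm i)) hab
  let r : α → ℕ := fun a => if h : a ∈ T then e ⟨a, h⟩ else 0
  have hr : ∀ a (ha : a ∈ T), r a = e ⟨a, ha⟩ := fun a ha => dif_pos ha
  refine ⟨r, ⟨fun a ha => ?_, fun a ha b hb hab => ?_, fun i hi => ?_⟩, fun a ha b hb hab => ?_⟩
  · simp [hr a ha]
  · rw [hr a ha, hr b hb] at hab
    simpa using e.injective (Fin.ext hab)
  · refine ⟨e.symm ⟨i, hi⟩, (e.symm ⟨i, hi⟩).2, ?_⟩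
    simp [hr _ (e.symm ⟨i, hi⟩).2]
  · rw [hr a ha, hr b hb] at hab
    exact he ⟨a, ha⟩ ⟨b, hb⟩ hab

theorem exists_monotone_blocks (G : α → β) (T : Finset α) {w : ℕ} (hw : 0 < w) :
    ∃ ι : α → ℕ, (∀ a ∈ T, ι a * w < #T) ∧ (∀ i, #{a ∈ T | ι a = i} ≤ w) ∧
      (∀ i, (i + 1) * w ≤ #T → #{a ∈ T | ι a = i} = w) ∧
      ∀ a ∈ T, ∀ b ∈ T, ι a < ι b → G a ≤ G b := by
  classical
  obtain ⟨r, hr, hrG⟩ := exists_rank G T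
  have hblock : ∀ n i, n / w = i ↔ n ∈ Ico (i * w) ((i + 1) * w) := fun n i => by
    rw [Nat.div_eq_iff hw, mem_Ico]
    lia
  have hcard : ∀ i, #{a ∈ T | r a / w = i} = #{n ∈ Ico (i * w) ((i + 1) * w) | n < #T} := by
    intro i
    refine card_nbij r (fun a ha => ?_) (hr.injOn.mono (mod_cast filter_subset _ _)) fun n hn => ?_
    · obtain ⟨haT, hai⟩ := mem_filter.1 ha
      exact mem_filter.2 ⟨(hblock _ _).1 hai, hr.mapsTo haT⟩
    · obtain ⟨hni, hnT⟩ := mem_filter.1 hn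
      obtain ⟨a, haT, rfl⟩ := hr.surjOn hnT
      exact ⟨a, mem_filter.2 ⟨haT, (hblock _ _).2 hni⟩, rfl⟩
  have hIco : ∀ i, #(Ico (i * w) ((i + 1) * w)) = w := fun i => by
    rw [Nat.card_Ico, ← Nat.sub_mul, Nat.add_sub_cancel_left, one_mul]
  refine ⟨fun a => r a / w, fun a ha => (Nat.div_mul_le_self _ _).trans_lt (hr.mapsTo ha),
    fun i => ?_, fun i hi => ?_, fun a ha b hb hab => ?_⟩
  · exact (hcard i).trans_le ((card_filter_le _ _).trans_eq (hIco i))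
  · rw [hcard, filter_true_of_mem fun n hn => (mem_Ico.1 hn).2.trans_le hi, hIco]
  · exact hrG a ha b hb (Nat.lt_of_div_lt_div hab).le

end Blocks

section Transversals

variable {α ι κ : Type*} [DecidableEq ι] [DecidableEq κ] {T : Finset α} {r : α → ι} {c : α → κ}
  {w s : ℕ}

theorem exists_heavy_cell_avoiding (hr : ∀ i, #{a ∈ T | r a = i} ≤ w)
    (hc : ∀ j, #{a ∈ T | c a = j} ≤ w) (D : Finset (ι × κ))
    (h : 2 * #D * w + #(T.image r) * #(T.image c) * s < #T) :
    ∃ p : ι × κ, s < #{a ∈ T | (r a, c a) = p} ∧ ∀ d ∈ D, d.1 ≠ p.1 ∧ d.2 ≠ p.2 := by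
  classical
  set T' := {a ∈ T | ∀ d ∈ D, d.1 ≠ r a ∧ d.2 ≠ c a} with hT'
  have hcover : T ⊆ T' ∪ (D.biUnion (fun d => {a ∈ T | r a = d.1}) ∪
      D.biUnion fun d => {a ∈ T | c a = d.2}) := by
    intro a ha
    simp only [hT', mem_union, mem_biUnion, mem_filter]
    grind
  have hrows := card_biUnion_le_card_mul D _ w fun d _ => hr d.1
  have hcols := card_biUnion_le_card_mul D _ w fun d _ => hc d.2
  have hT'_card : #(T.image r ×ˢ T.image c) * s < #T' := by
    have := (card_le_card hcover).trans (card_union_le _ _)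
    have := card_union_le (D.biUnion fun d => {a ∈ T | r a = d.1})
      (D.biUnion fun d => {a ∈ T | c a = d.2})
    rw [card_product]
    lia
  obtain ⟨p, -, hp⟩ := exists_lt_card_fiber_of_mul_lt_card_of_maps_to (f := fun a => (r a, c a))
    (fun a ha => mk_mem_product (mem_image_of_mem r (mem_filter.1 ha).1)
      (mem_image_of_mem c (mem_filter.1 ha).1)) hT'_card
  refine ⟨p, hp.trans_le (card_le_card (filter_subset_filter _ (filter_subset _ _))), ?_⟩
  obtain ⟨a, ha⟩ := card_pos.1 (Nat.zero_le s |>.trans_lt hp)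
  obtain ⟨haT', rfl⟩ := mem_filter.1 ha
  exact (mem_filter.1 haT').2

theorem exists_heavy_transversal (hr : ∀ i, #{a ∈ T | r a = i} ≤ w)
    (hc : ∀ j, #{a ∈ T | c a = j} ≤ w) (m : ℕ)
    (h : 2 * m * w + #(T.image r) * #(T.image c) * s < #T) :
    ∃ D : Finset (ι × κ), #D = m ∧ Set.InjOn Prod.fst (D : Set (ι × κ)) ∧
      Set.InjOn Prod.snd (D : Set (ι × κ)) ∧ ∀ p ∈ D, s < #{a ∈ T | (r a, c a) = p} := by
  induction m with
  | zero => exact ⟨∅, by simp⟩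
  | succ m ih =>
    have hm : 2 * m * w + #(T.image r) * #(T.image c) * s < #T := by lia
    obtain ⟨D, rfl, hfst, hsnd, hheavy⟩ := ih hm
    obtain ⟨p, hp, havoid⟩ := exists_heavy_cell_avoiding hr hc D hm
    have hpD : p ∉ D := fun hpD => (havoid p hpD).1 rfl
    refine ⟨insert p D, card_insert_of_notMem hpD, ?_, ?_,
      forall_mem_insert _ _ _ |>.2 ⟨hp, hheavy⟩⟩
    · rw [coe_insert, Set.injOn_insert (mod_cast hpD)]
      exact ⟨hfst, fun ⟨d, hd, hdp⟩ => (havoid d hd).1 hdp⟩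
    · rw [coe_insert, Set.injOn_insert (mod_cast hpD)]
      exact ⟨hsnd, fun ⟨d, hd, hdp⟩ => (havoid d hd).2 hdp⟩

end Transversals

/-- `HasClusters k s x T R`: the set `T` contains `k` pairwise disjoint clusters of more than `s`
points each such that `R a b` holds whenever `a` and `b` come from different clusters and
`x a < x b`. -/
def HasClusters {α β : Type*} [LT β] (k s : ℕ) (x : α → β) (T : Finset α) (R : α → α → Prop) :
    Prop :=
  ∃ A : Fin k → Finset α, (∀ i, A i ⊆ T) ∧ (∀ i j, i ≠ j → Disjoint (A i) (A j)) ∧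
    (∀ i, s < #(A i)) ∧ ∀ i j, i ≠ j → ∀ a ∈ A i, ∀ b ∈ A j, x a < x b → R a b

section Clusters

variable {α β γ : Type*} {k s : ℕ} {T : Finset α}

theorem HasClusters.imp [LT β] {x : α → β} {R R' : α → α → Prop} (h : HasClusters k s x T R)
    (hR : ∀ a ∈ T, ∀ b ∈ T, x a < x b → R a b → R' a b) : HasClusters k s x T R' := by
  obtain ⟨A, hAT, hdisj, hcard, hA⟩ := h
  exact ⟨A, hAT, hdisj, hcard, fun i j hij a ha b hb hab =>
    hR a (hAT i ha) b (hAT j hb) hab (hA i j hij a ha b hb hab)⟩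

theorem hasClusters_of_cells [LinearOrder β] {x : α → β} {r c : α → ℕ} {D : Finset (ℕ × ℕ)}
    {R : α → α → Prop} {ρ : ℕ → ℕ → Prop} (hD : #D = k)
    (hfst : Set.InjOn Prod.fst (D : Set (ℕ × ℕ)))
    (hheavy : ∀ p ∈ D, s < #{a ∈ T | (r a, c a) = p})
    (hx : ∀ a ∈ T, ∀ b ∈ T, r a < r b → x a ≤ x b)
    (hρ : ∀ p ∈ D, ∀ p' ∈ D, p.1 < p'.1 → ρ p.2 p'.2)
    (hR : ∀ a ∈ T, ∀ b ∈ T, ρ (c a) (c b) → R a b) : HasClusters k s x T R := by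
  classical
  let e := (D.equivFinOfCardEq hD).symm
  have hfst_ne : ∀ i j, i ≠ j → (e i).1.1 ≠ (e j).1.1 := fun i j hij h =>
    hij (e.injective (Subtype.ext (hfst (e i).2 (e j).2 h)))
  refine ⟨fun i => {a ∈ T | (r a, c a) = e i}, fun i => filter_subset _ _, fun i j hij => ?_,
    fun i => hheavy _ (e i).2, fun i j hij a ha b hb hab => ?_⟩
  · exact disjoint_filter.2 fun a _ hai haj =>
      hij (e.injective (Subtype.ext (hai.symm.trans haj)))
  · obtain ⟨haT, hai⟩ := mem_filter.1 ha
    obtain ⟨hbT, hbj⟩ := mem_filter.1 hb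
    have hne := hfst_ne i j hij
    rw [← hai, ← hbj] at hne
    have hlt : r a < r b := lt_of_le_of_ne
      (le_of_not_gt fun hba => hab.not_ge (hx b hbT a haT hba)) hne
    exact hR a haT b hbT (hρ _ (hai ▸ (e i).2) _ (hbj ▸ (e j).2) hlt)

theorem hasClusters_le_or_ge_of_transversal [LinearOrder β] [LinearOrder γ] {x : α → β} {G : α → γ}
    {r c : α → ℕ} (hrx : ∀ a ∈ T, ∀ b ∈ T, r a < r b → x a ≤ x b)
    (hcG : ∀ a ∈ T, ∀ b ∈ T, c a < c b → G a ≤ G b) (m : ℕ) {C : Finset (ℕ × ℕ)}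
    (hC : m * m < #C) (hfst : Set.InjOn Prod.fst (C : Set (ℕ × ℕ)))
    (hsnd : Set.InjOn Prod.snd (C : Set (ℕ × ℕ)))
    (hheavy : ∀ p ∈ C, s < #{a ∈ T | (r a, c a) = p}) :
    HasClusters (m + 1) s x T (fun a b => G a ≤ G b) ∨
      HasClusters (m + 1) s x T (fun a b => G b ≤ G a) := by
  obtain ⟨D, hDC, hD, hchain⟩ | ⟨D, hDC, hD, hanti⟩ := exists_isChain_or_isAntichain m m C hC
  · refine .inl (hasClusters_of_cells (ρ := (· < ·)) hD (hfst.mono hDC)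
      (fun p hp => hheavy p (hDC hp)) hrx (fun p hp p' hp' hlt => ?_) hcG)
    have hle : p ≤ p' := (hchain.total hp hp').resolve_right fun h => hlt.not_ge h.1
    exact lt_of_le_of_ne hle.2 fun h => hlt.ne (congrArg Prod.fst (hsnd (hDC hp) (hDC hp') h))
  · refine .inr (hasClusters_of_cells (ρ := (· > ·)) hD (hfst.mono hDC)
      (fun p hp => hheavy p (hDC hp)) hrx (fun p hp p' hp' hlt => ?_)
      fun a ha b hb => hcG b hb a ha)
    have hnot_le : ¬ p ≤ p' := hanti hp hp' fun h => hlt.ne (congrArg Prod.fst h)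
    exact lt_of_not_ge fun h => hnot_le ⟨hlt.le, h⟩

theorem hasClusters_le_or_ge [LinearOrder β] [LinearOrder γ] (x : α → β) (G : α → γ) (hk : 1 ≤ k)
    (hT : 75 * k ^ 2 ≤ #T) (hTs : 1000 * k ^ 4 * s ≤ #T) :
    HasClusters k s x T (fun a b => G a ≤ G b) ∨ HasClusters k s x T (fun a b => G b ≤ G a) := by
  classical
  have hk2 : 1 ≤ k ^ 2 := Nat.one_le_pow _ _ hk
  -- Slice `T` into blocks of `w` points, both along `x` and along `G`: at most `6 * k ^ 2` of each.
  set w := #T / (4 * k ^ 2)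
  have hw : 2 ≤ w := (Nat.le_div_iff_mul_le (by lia)).2 (by lia)
  have hwT : w * (4 * k ^ 2) ≤ #T := Nat.div_mul_le_self _ _
  have hTw : #T < 6 * k ^ 2 * w := by
    have : #T < 4 * k ^ 2 * (w + 1) := Nat.lt_mul_div_succ _ (by lia)
    nlinarith
  obtain ⟨r, hr_lt, hr_card, -, hrx⟩ := exists_monotone_blocks x T (by lia : 0 < w)
  obtain ⟨c, hc_lt, hc_card, -, hcG⟩ := exists_monotone_blocks G T (by lia : 0 < w)
  have himage : ∀ f : α → ℕ, (∀ a ∈ T, f a * w < #T) → #(T.image f) ≤ 6 * k ^ 2 := fun f hf => by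
    refine (card_le_card (image_subset_iff.2 fun a ha => mem_range.2 ?_)).trans_eq (card_range _)
    exact lt_of_mul_lt_mul_right ((hf a ha).trans hTw) w.zero_le
  have hcells : 2 * k ^ 2 * w + #(T.image r) * #(T.image c) * s < #T := by
    have hle := Nat.mul_le_mul_right s (Nat.mul_le_mul (himage r hr_lt) (himage c hc_lt))
    linarith
  obtain ⟨C, hC, hfst, hsnd, hheavy⟩ := exists_heavy_transversal hr_card hc_card (k ^ 2) hcells
  obtain ⟨m, rfl⟩ := Nat.exists_eq_add_of_le' hk
  exact hasClusters_le_or_ge_of_transversal hrx hcG m (by lia) hfst hsnd hheavy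

end Clusters

/-! ### Quantiles and splitting lines -/

section Quantiles

variable {α β : Type*} [LinearOrder β]

theorem exists_lower_quantile {m : ℕ} (hm : 0 < m) {S : Finset α} (hS : S.Nonempty) (f : α → β) :
    ∃ u, #S ≤ m * #{a ∈ S | f a ≤ u} ∧ m * #{a ∈ S | f a < u} < #S := by
  classical
  set V := {a ∈ S | #S ≤ m * #{b ∈ S | f b ≤ f a}}
  have hV : V.Nonempty := by
    obtain ⟨a, ha, hmax⟩ := S.exists_max_image f hS
    refine ⟨a, mem_filter.2 ⟨ha, ?_⟩⟩
    rw [filter_true_of_mem hmax]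
    exact Nat.le_mul_of_pos_left _ hm
  obtain ⟨a, ha, hmin⟩ := V.exists_min_image f hV
  refine ⟨f a, (mem_filter.1 ha).2, lt_of_not_ge fun hge => ?_⟩
  have hbelow : {b ∈ S | f b < f a}.Nonempty :=
    card_pos.1 (Nat.pos_of_mul_pos_left (hS.card_pos.trans_le hge))
  obtain ⟨b, hb, hbmax⟩ := exists_max_image _ f hbelow
  obtain ⟨hbS, hba⟩ := mem_filter.1 hb
  have hbV : b ∈ V := by
    refine mem_filter.2 ⟨hbS, hge.trans (Nat.mul_le_mul_left m (card_le_card fun c hc => ?_))⟩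
    exact mem_filter.2 ⟨(mem_filter.1 hc).1, hbmax c hc⟩
  exact hba.not_ge (hmin b hbV)

theorem exists_upper_quantile {m : ℕ} (hm : 0 < m) {S : Finset α} (hS : S.Nonempty) (f : α → β) :
    ∃ v, #S ≤ m * #{a ∈ S | v ≤ f a} ∧ m * #{a ∈ S | v < f a} < #S :=
  exists_lower_quantile (β := βᵒᵈ) hm hS f

theorem le_of_card_filter_lt_add_card_filter_gt_lt {Q : Finset α} {f g : α → β} {u v : β}
    (hfg : ∀ q ∈ Q, f q ≤ g q) (h : #{q ∈ Q | f q < u} + #{q ∈ Q | v < g q} < #Q) : u ≤ v := by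
  classical
  obtain ⟨q, hq, hq'⟩ := exists_mem_notMem_of_card_lt_card ((card_union_le _ _).trans_lt h)
  simp only [mem_union, mem_filter, hq, true_and, not_or, not_lt] at hq'
  exact hq'.1.trans ((hfg q hq).trans hq'.2)

theorem lower_quartile_le_upper_quartile_of_pairs {S R : Finset α} {f : α → β} {u v : β}
    (hpairs : #S * #R ≤ 2 * #{p ∈ S ×ˢ R | f p.1 ≤ f p.2})
    (hu : 4 * #{a ∈ S | f a < u} < #S) (hv : 4 * #{b ∈ R | v < f b} < #R) : u ≤ v := by
  classical
  refine le_of_card_filter_lt_add_card_filter_gt_lt (Q := {p ∈ S ×ˢ R | f p.1 ≤ f p.2})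
    (f := fun p => f p.1) (g := fun p => f p.2) (fun p hp => (mem_filter.1 hp).2) ?_
  have hS : #{p ∈ {p ∈ S ×ˢ R | f p.1 ≤ f p.2} | f p.1 < u} ≤ #{a ∈ S | f a < u} * #R := by
    rw [← card_product]
    exact card_le_card fun p => by simp +contextual
  have hR : #{p ∈ {p ∈ S ×ˢ R | f p.1 ≤ f p.2} | v < f p.2} ≤ #S * #{b ∈ R | v < f b} := by
    rw [← card_product]
    exact card_le_card fun p => by simp +contextual
  have hSR := Nat.mul_lt_mul_of_pos_right hu (Nat.zero_le _ |>.trans_lt hv)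
  have hRS := Nat.mul_lt_mul_of_pos_left hv (Nat.zero_le _ |>.trans_lt hu)
  lia

theorem exists_common_quartile {S R : Finset α} (hS : S.Nonempty) (hR : R.Nonempty) {f : α → β}
    (hle : #S * #R ≤ 2 * #{p ∈ S ×ˢ R | f p.1 ≤ f p.2})
    (hge : #S * #R ≤ 2 * #{p ∈ S ×ˢ R | f p.2 ≤ f p.1}) :
    ∃ c, ∀ T ∈ ({S, R} : Set (Finset α)),
      #T ≤ 4 * #{a ∈ T | f a ≤ c} ∧ #T ≤ 4 * #{a ∈ T | c ≤ f a} := by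
  obtain ⟨u, hu, hu'⟩ := exists_lower_quantile four_pos hS f
  obtain ⟨v, hv, hv'⟩ := exists_upper_quantile four_pos hS f
  obtain ⟨u₂, hu₂, hu₂'⟩ := exists_lower_quantile four_pos hR f
  obtain ⟨v₂, hv₂, hv₂'⟩ := exists_upper_quantile four_pos hR f
  have huv : max u u₂ ≤ v := max_le
    (le_of_card_filter_lt_add_card_filter_gt_lt (Q := S) (fun a _ => le_refl (f a)) (by lia))
    (lower_quartile_le_upper_quartile_of_pairs (β := βᵒᵈ) hge hv' hu₂')
  have huv₂ : max u u₂ ≤ v₂ := max_le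
    (lower_quartile_le_upper_quartile_of_pairs hle hu' hv₂')
    (le_of_card_filter_lt_add_card_filter_gt_lt (Q := R) (fun a _ => le_refl (f a)) (by lia))
  have hmono : ∀ {T : Finset α} {p q : α → Prop} [DecidablePred p] [DecidablePred q],
      #T ≤ 4 * #{a ∈ T | p a} → (∀ a, p a → q a) → #T ≤ 4 * #{a ∈ T | q a} := fun h hpq =>
    h.trans (Nat.mul_le_mul_left 4 (card_le_card (monotone_filter_right _ fun a _ => hpq a)))
  refine ⟨max u u₂, ?_⟩
  rintro T (rfl | rfl)
  · exact ⟨hmono hu fun a h => h.trans (le_max_left _ _), hmono hv fun a h => huv.trans h⟩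
  · exact ⟨hmono hu₂ fun a h => h.trans (le_max_right _ _), hmono hv₂ fun a h => huv₂.trans h⟩

end Quantiles

/-- Every point of `X` has a smaller `x`-coordinate than every point of `Y`. -/
def IsLeftOf {α β : Type*} [LT β] (x : α → β) (X Y : Finset α) : Prop :=
  ∀ a ∈ X, ∀ b ∈ Y, x a < x b

theorem IsLeftOf.mono {α β : Type*} [LT β] {x : α → β} {X Y X' Y' : Finset α}
    (h : IsLeftOf x X Y) (hX : X' ⊆ X) (hY : Y' ⊆ Y) : IsLeftOf x X' Y' :=
  fun a ha b hb => h a (hX ha) b (hY hb)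

/-- The slope of the chord from `a` to `b` in a planar configuration with coordinate functions `x`
and `y`. Its junk value for `x a = x b` is `0`. -/
def chordSlope {α 𝕜 : Type*} [Field 𝕜] (x y : α → 𝕜) (a b : α) : 𝕜 := (y b - y a) / (x b - x a)

theorem chordSlope_neg {α 𝕜 : Type*} [Field 𝕜] (x y : α → 𝕜) (a b : α) :
    chordSlope x (-y) a b = -chordSlope x y a b := by
  simp only [chordSlope, Pi.neg_apply, ← neg_sub', neg_div]

section SplittingLines

variable {α 𝕜 : Type*} [Field 𝕜] [LinearOrder 𝕜] [IsStrictOrderedRing 𝕜]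

theorem exists_splitting_line {x : α → 𝕜} (y : α → 𝕜) {X Z : Finset α} (hX : X.Nonempty)
    (hZ : Z.Nonempty) (hXZ : IsLeftOf x X Z) :
    ∃ l c, ∀ T ∈ ({X, Z} : Set (Finset α)),
      #T ≤ 4 * #{a ∈ T | y a ≤ l * x a + c} ∧ #T ≤ 4 * #{a ∈ T | l * x a + c ≤ y a} := by
  classical
  -- The direction of the line is the median slope of the chords between `X` and `Z`.
  obtain ⟨l, hl, hl'⟩ := exists_lower_quantile two_pos (hX.product hZ)
    fun p => chordSlope x y p.1 p.2
  rw [card_product] at hl hl'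
  let f := fun a => y a - l * x a
  have hslope_lt : ∀ p ∈ X ×ˢ Z, (chordSlope x y p.1 p.2 < l ↔ ¬ f p.1 ≤ f p.2) := fun p hp => by
    have hp := mem_product.1 hp
    rw [chordSlope, div_lt_iff₀ (sub_pos.2 (hXZ _ hp.1 _ hp.2)), not_le]
    constructor <;> intro h <;> simp only [f] at * <;> linarith
  have hslope_le : ∀ p ∈ X ×ˢ Z, (chordSlope x y p.1 p.2 ≤ l ↔ f p.2 ≤ f p.1) := fun p hp => by
    have hp := mem_product.1 hp
    rw [chordSlope, div_le_iff₀ (sub_pos.2 (hXZ _ hp.1 _ hp.2))]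
    constructor <;> intro h <;> simp only [f] at * <;> linarith
  rw [filter_congr hslope_lt] at hl'
  rw [filter_congr hslope_le] at hl
  have hle : #X * #Z ≤ 2 * #{p ∈ X ×ˢ Z | f p.1 ≤ f p.2} := by
    have := card_filter_add_card_filter_not (s := X ×ˢ Z) fun p => f p.1 ≤ f p.2
    rw [card_product] at this
    lia
  obtain ⟨c, hc⟩ := exists_common_quartile hX hZ hle hl
  simp only [f, sub_le_iff_le_add', le_sub_iff_add_le'] at hc
  exact ⟨l, c, hc⟩

end SplittingLines

/-! ### Bent triples -/

theorem card_filter_le_eq {α β : Type*} [LinearOrder β] (T : Finset α) (f g : α → β) :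
    #{a ∈ T | f a ≤ g a} = #{a ∈ T | f a < g a} + #{a ∈ T | f a = g a} := by
  classical
  rw [← card_union_of_disjoint (disjoint_filter.2 fun a _ h => h.ne), ← filter_or]
  simp only [le_iff_lt_or_eq]

section BentTriples

variable {α 𝕜 : Type*} [Field 𝕜] [LinearOrder 𝕜]

/-- Some non-vertical line runs strictly above all points of `Y` and strictly below all points of
`X` and of `Z`. For `X`, `Y`, `Z` ordered from left to right, every transversal is then a cup. -/
def IsCup (x y : α → 𝕜) (X Y Z : Finset α) : Prop :=
  ∃ l c, (∀ a ∈ X, l * x a + c < y a) ∧ (∀ a ∈ Y, y a < l * x a + c) ∧ ∀ a ∈ Z, l * x a + c < y a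

/-- The triple `T` is a cup (for the sign `1`) or a cap, that is, a cup after a reflection in the
`x`-axis (for the sign `-1`). -/
def IsBent (x y : α → 𝕜) (T : Fin 3 → Finset α) : Prop :=
  ∃ ε : ℤˣ, IsCup x (ε • y) (T 0) (T 1) (T 2)

theorem IsCup.mono {x y : α → 𝕜} {X Y Z X' Y' Z' : Finset α} (h : IsCup x y X Y Z) (hX : X' ⊆ X)
    (hY : Y' ⊆ Y) (hZ : Z' ⊆ Z) : IsCup x y X' Y' Z' := by
  obtain ⟨l, c, hX_above, hY_below, hZ_above⟩ := h
  exact ⟨l, c, fun a ha => hX_above a (hX ha), fun a ha => hY_below a (hY ha),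
    fun a ha => hZ_above a (hZ ha)⟩

theorem IsBent.mono {x y : α → 𝕜} {T T' : Fin 3 → Finset α} (h : IsBent x y T) (hT : T' ≤ T) :
    IsBent x y T' :=
  h.imp fun _ hcup => hcup.mono (hT 0) (hT 1) (hT 2)

variable [IsStrictOrderedRing 𝕜] {x y : α → 𝕜}

theorem exists_isBent_le {T : Fin 3 → Finset α}
    (hline : ∀ i l c, #{a ∈ T i | y a = l * x a + c} ≤ 2) (h₀ : (T 0).Nonempty)
    (h₂ : (T 2).Nonempty) (hleft : IsLeftOf x (T 0) (T 2)) :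
    ∃ T' ≤ T, (∀ i, #(T i) ≤ 4 * (#(T' i) + 2)) ∧ IsBent x y T' := by
  obtain ⟨l, c, hsplit⟩ := exists_splitting_line y h₀ h₂ hleft
  obtain ⟨hbelow₀, habove₀⟩ := hsplit _ (.inl rfl)
  obtain ⟨hbelow₂, habove₂⟩ := hsplit _ (.inr rfl)
  let below := fun i => {a ∈ T i | y a < l * x a + c}
  let above := fun i => {a ∈ T i | l * x a + c < y a}
  have hbelow : ∀ i, #{a ∈ T i | y a ≤ l * x a + c} ≤ #(below i) + 2 := fun i => by
    rw [card_filter_le_eq]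
    exact Nat.add_le_add_left (hline i l c) _
  have habove : ∀ i, #{a ∈ T i | l * x a + c ≤ y a} ≤ #(above i) + 2 := fun i => by
    rw [card_filter_le_eq]
    simpa only [eq_comm] using Nat.add_le_add_left (hline i l c) #(above i)
  have hcover : #(T 1) ≤ #(below 1) + (#(above 1) + 2) := by
    have := card_filter_add_card_filter_not (s := T 1) fun a => y a < l * x a + c
    simp only [not_lt] at this
    exact this.symm.trans_le (Nat.add_le_add_left (habove 1) _)
  obtain hmaj | hmaj := le_total #(above 1) #(below 1)
  · refine ⟨![above 0, below 1, above 2], ?_, ?_, 1, l, c, ?_⟩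
    · simp [Pi.le_def, Fin.forall_fin_succ, above, below]
    · have := habove 0
      have := habove 2
      intro i
      fin_cases i
      exacts [show #(T 0) ≤ 4 * (#(above 0) + 2) by lia, show #(T 1) ≤ 4 * (#(below 1) + 2) by lia,
        show #(T 2) ≤ 4 * (#(above 2) + 2) by lia]
    · simp +contextual [above, below]
  · refine ⟨![below 0, above 1, below 2], ?_, ?_, -1, -l, -c, ?_⟩
    · simp [Pi.le_def, Fin.forall_fin_succ, above, below]
    · have := hbelow 0
      have := hbelow 2
      intro i
      fin_cases i
      exacts [show #(T 0) ≤ 4 * (#(below 0) + 2) by lia, show #(T 1) ≤ 4 * (#(above 1) + 2) by lia,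
        show #(T 2) ≤ 4 * (#(below 2) + 2) by lia]
    · simp only [Units.neg_smul, one_smul, neg_mul, ← neg_add, Pi.neg_apply, neg_lt_neg_iff]
      simp +contextual [above, below]

theorem exists_bent_omitting {S : Fin 4 → Finset α} (m : Fin 4)
    (hline : ∀ i l c, #{a ∈ S i | y a = l * x a + c} ≤ 2) (hS : ∀ i, (S i).Nonempty)
    (hleft : ∀ i j, i < j → IsLeftOf x (S i) (S j)) :
    ∃ S' ≤ S, S' m = S m ∧ (∀ i, i ≠ m → #(S i) ≤ 4 * (#(S' i) + 2)) ∧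
      IsBent x y (S' ∘ m.succAbove) := by
  obtain ⟨T, hTS, hcard, hT⟩ := exists_isBent_le (T := S ∘ m.succAbove) (fun i => hline _) (hS _)
    (hS _) (hleft _ _ (m.strictMono_succAbove (by decide)))
  refine ⟨m.insertNth (S m) T, ?_, by simp, fun i hi => ?_, ?_⟩
  · exact Fin.insertNth_le_iff.2 ⟨le_rfl, hTS⟩
  · obtain ⟨j, rfl⟩ := Fin.exists_succAbove_eq hi
    simpa using hcard j
  · simpa [Function.comp_def] using hT

theorem exists_le_forall_isBent {S : Fin 4 → Finset α}
    (hline : ∀ i l c, #{a ∈ S i | y a = l * x a + c} ≤ 2) (hS : ∀ i, 190 ≤ #(S i))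
    (hleft : ∀ i j, i < j → IsLeftOf x (S i) (S j)) (M : Finset (Fin 4)) :
    ∃ S' ≤ S, (∀ i, #(S i) + 3 ≤ 4 ^ #(M.erase i) * (#(S' i) + 3)) ∧
      ∀ m ∈ M, IsBent x y (S' ∘ m.succAbove) := by
  induction M using Finset.induction_on with
  | empty => exact ⟨S, le_rfl, by simp⟩
  | insert m M hm ih =>
    obtain ⟨S₁, hS₁, hcard₁, hbent₁⟩ := ih
    have hne : ∀ i, (S₁ i).Nonempty := fun i => by
      have : #(M.erase i) ≤ 3 := Nat.le_of_lt_succ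
        ((card_le_card (erase_subset_erase i (subset_univ M))).trans_lt
          (card_erase_lt_of_mem (mem_univ i)))
      have := Nat.pow_le_pow_right four_pos this
      have := hS i
      have := hcard₁ i
      by_contra h
      simp only [not_nonempty_iff_eq_empty.1 h, card_empty] at *
      lia
    obtain ⟨S₂, hS₂, hm₂, hcard₂, hbent₂⟩ := exists_bent_omitting m
      (fun i l c => (card_le_card (filter_subset_filter _ (hS₁ i))).trans (hline i l c)) hne
      fun i j hij => (hleft i j hij).mono (hS₁ i) (hS₁ j)
    refine ⟨S₂, hS₂.trans hS₁, fun i => ?_, forall_mem_insert _ _ _ |>.2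
      ⟨hbent₂, fun m' hm' => (hbent₁ m' hm').mono fun j => hS₂ _⟩⟩
    obtain rfl | hi := eq_or_ne i m
    · simpa [hm, hm₂] using hcard₁ i
    · rw [erase_insert_of_ne hi.symm, card_insert_of_notMem (by simp [hm]), pow_succ, mul_assoc]
      exact (hcard₁ i).trans (Nat.mul_le_mul_left _ (by linarith [hcard₂ i hi]))

theorem exists_four_bent_blocks {P : Finset α} (hx : Set.InjOn x P)
    (hline : ∀ l c, #{a ∈ P | y a = l * x a + c} ≤ 2) (hP : 760 ≤ #P) :
    ∃ S : Fin 4 → Finset α, (∀ i, S i ⊆ P) ∧ (∀ i, #P ≤ 256 * #(S i) + 759) ∧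
      (∀ i j, i < j → IsLeftOf x (S i) (S j)) ∧ ∀ m : Fin 4, IsBent x y (S ∘ m.succAbove) := by
  classical
  obtain ⟨ι, -, -, hcard, hmono⟩ := exists_monotone_blocks x P (w := #P / 4) (by lia)
  let B : Fin 4 → Finset α := fun i => {a ∈ P | ι a = i}
  have hBP : ∀ i, B i ⊆ P := fun i => filter_subset _ _
  have hB : ∀ i, #(B i) = #P / 4 := fun i => hcard i <|
    (Nat.mul_le_mul_right _ i.2).trans (Nat.mul_div_le _ _)
  have hBleft : ∀ i j, i < j → IsLeftOf x (B i) (B j) := fun i j hij a ha b hb => by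
    obtain ⟨haP, hai⟩ := mem_filter.1 ha
    obtain ⟨hbP, hbj⟩ := mem_filter.1 hb
    have hιab : ι a < ι b := by rwa [hai, hbj]
    exact lt_of_le_of_ne (hmono a haP b hbP hιab) fun h => hιab.ne (congrArg ι (hx haP hbP h))
  obtain ⟨S, hSB, hS, hbent⟩ := exists_le_forall_isBent
    (fun i l c => (card_le_card (filter_subset_filter _ (hBP i))).trans (hline l c))
    (fun i => by rw [hB]; lia) hBleft univ
  refine ⟨S, fun i => (hSB i).trans (hBP i), fun i => ?_,
    fun i j hij => (hBleft i j hij).mono (hSB i) (hSB j), fun m => hbent m (mem_univ m)⟩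
  have := hS i
  rw [hB, card_erase_of_mem (mem_univ i), card_univ, Fintype.card_fin] at this
  lia

end BentTriples

/-! ### Cuts -/

section Cuts

variable {α 𝕜 : Type*} [Field 𝕜] [LinearOrder 𝕜] {x y : α → 𝕜} {X Y Z : Finset α}

/-- Each point `a` of `X` carries a line, of slope `c a`, which is steeper than every chord from `a`
to `Y` and flatter than every chord from `a` to `Z`. The lines come from a pencil, and comparing
their positions `G a` and `G b` in it decides whether the chord between `a` and `b` is flatter or
steeper than `c a`. -/
def IsCut (x y : α → 𝕜) (X Y Z : Finset α) : Prop :=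
  ∃ c G : α → 𝕜,
    (∀ a ∈ X, (∀ z ∈ Y, chordSlope x y a z < c a) ∧ ∀ z ∈ Z, c a < chordSlope x y a z) ∧
    ∀ a ∈ X, ∀ b ∈ X, x a < x b →
      (G a ≤ G b → chordSlope x y a b ≤ c a) ∧ (G b ≤ G a → c a ≤ chordSlope x y a b)

theorem IsCut.chordSlope_lt (h : IsCut x y X Y Z) : ∀ a ∈ X, ∀ b ∈ Y, ∀ c ∈ Z,
    chordSlope x y a b < chordSlope x y a c := by
  obtain ⟨c, G, hYZ, -⟩ := h
  exact fun a ha b hb c hc => ((hYZ a ha).1 b hb).trans ((hYZ a ha).2 c hc)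

variable [IsStrictOrderedRing 𝕜]

theorem IsCut.of_neg (h : IsCut x (-y) X Y Z) : IsCut x y X Z Y := by
  obtain ⟨c, G, hYZ, hG⟩ := h
  simp only [chordSlope_neg] at hYZ hG
  refine ⟨-c, -G, fun a ha => ⟨fun z hz => ?_, fun z hz => ?_⟩,
    fun a ha b hb hab => ⟨fun h => ?_, fun h => ?_⟩⟩
  · exact lt_neg.1 ((hYZ a ha).2 z hz)
  · exact neg_lt.1 ((hYZ a ha).1 z hz)
  · exact le_neg.1 ((hG a ha b hb hab).2 (neg_le_neg_iff.1 h))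
  · exact neg_le.1 ((hG a ha b hb hab).1 (neg_le_neg_iff.1 h))

-- The line through `a` of the pencil spanned by the lines `f = 0` and `h = 0` has the slope
-- `l - w * (f a / h a)`.
theorem chordSlope_sub_pencil_slope_mul {f h : α → 𝕜} {l w : 𝕜}
    (hf : ∀ a b, f b - f a = y b - y a - l * (x b - x a))
    (hh : ∀ a b, h b - h a = -(w * (x b - x a))) {a z : α} (hxz : x z ≠ x a) (ha : h a ≠ 0) :
    (chordSlope x y a z - (l - w * (f a / h a))) * ((x z - x a) ^ 2 * h a) =
      (x z - x a) * (f z * h a - f a * h z) := by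
  have hxz := sub_ne_zero.2 hxz
  rw [chordSlope]
  field_simp
  linear_combination f a * hh a z - h a * hf a z

theorem isCut_of_pencil {f h : α → 𝕜} {l w : 𝕜}
    (hf : ∀ a b, f b - f a = y b - y a - l * (x b - x a))
    (hh : ∀ a b, h b - h a = -(w * (x b - x a))) (hpos : ∀ a ∈ X, 0 < h a)
    (hY : ∀ a ∈ X, ∀ z ∈ Y, (x z - x a) * (f z * h a - f a * h z) < 0)
    (hZ : ∀ a ∈ X, ∀ z ∈ Z, 0 < (x z - x a) * (f z * h a - f a * h z)) : IsCut x y X Y Z := by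
  have hslope : ∀ a ∈ X, ∀ z, x z ≠ x a → 0 < (x z - x a) ^ 2 * h a ∧
      (chordSlope x y a z - (l - w * (f a / h a))) * ((x z - x a) ^ 2 * h a) =
        (x z - x a) * (f z * h a - f a * h z) := fun a ha z hxz =>
    ⟨mul_pos (sq_pos_of_ne_zero (sub_ne_zero.2 hxz)) (hpos a ha),
      chordSlope_sub_pencil_slope_mul hf hh hxz (hpos a ha).ne'⟩
  refine ⟨fun a => l - w * (f a / h a), fun a => -(f a / h a),
    fun a ha => ⟨fun z hz => ?_, fun z hz => ?_⟩, fun a ha b hb hab => ?_⟩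
  · obtain ⟨hscale, hmul⟩ := hslope a ha z fun h => by simpa [h] using hY a ha z hz
    exact sub_neg.1 (neg_of_mul_neg_left (hmul.trans_lt (hY a ha z hz)) hscale.le)
  · obtain ⟨hscale, hmul⟩ := hslope a ha z fun h => by simpa [h] using hZ a ha z hz
    exact sub_pos.1 (pos_of_mul_pos_left (hmul.symm ▸ hZ a ha z hz) hscale.le)
  · obtain ⟨hscale, hmul⟩ := hslope a ha b hab.ne'
    have hab := (sub_pos.2 hab).le
    refine ⟨fun h => ?_, fun h => ?_⟩
    · rw [neg_le_neg_iff, div_le_div_iff₀ (hpos b hb) (hpos a ha)] at h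
      exact sub_nonpos.1 (nonpos_of_mul_nonpos_left (hmul.trans_le
        (mul_nonpos_of_nonneg_of_nonpos hab (sub_nonpos.2 h))) hscale)
    · rw [neg_le_neg_iff, div_le_div_iff₀ (hpos a ha) (hpos b hb)] at h
      exact sub_nonneg.1 (nonneg_of_mul_nonneg_left (hmul.symm ▸
        mul_nonneg hab (sub_nonneg.2 h)) hscale)

theorem IsLeftOf.exists_between (h : IsLeftOf x X Y) :
    ∃ v, (∀ a ∈ X, x a < v) ∧ ∀ b ∈ Y, v < x b := by
  classical
  simpa using Order.exists_between_finsets (X.image x) (Y.image x) (by simpa [IsLeftOf] using h)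

theorem IsCup.isCut_left (h : IsCup x y X Y Z) (hXY : IsLeftOf x X Y) (hXZ : IsLeftOf x X Z)
    (hYZ : IsLeftOf x Y Z) : IsCut x y X Y Z := by
  classical
  obtain ⟨l, c, hX, hY, hZ⟩ := h
  have hXY_Z : IsLeftOf x (X ∪ Y) Z := fun a ha => (mem_union.1 ha).elim (hXZ a) (hYZ a)
  obtain ⟨v, hv, hvZ⟩ := hXY_Z.exists_between
  have hvX := fun a ha => sub_pos.2 (hv a (mem_union_left Y ha))
  have hvY := fun a ha => sub_pos.2 (hv a (mem_union_right X ha))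
  refine isCut_of_pencil (f := fun a => y a - (l * x a + c)) (h := fun a => v - x a) (l := l)
    (w := 1) (fun _ _ => by ring) (fun _ _ => by ring) hvX (fun a ha z hz => ?_) fun a ha z hz => ?_
  · exact mul_neg_of_pos_of_neg (sub_pos.2 (hXY a ha z hz)) <| sub_neg.2 <|
      (mul_neg_of_neg_of_pos (sub_neg.2 (hY z hz)) (hvX a ha)).trans
        (mul_pos (sub_pos.2 (hX a ha)) (hvY z hz))
  · exact mul_pos (sub_pos.2 (hXZ a ha z hz)) <| sub_pos.2 <|
      (mul_neg_of_pos_of_neg (sub_pos.2 (hX a ha)) (sub_neg.2 (hvZ z hz))).trans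
        (mul_pos (sub_pos.2 (hZ z hz)) (hvX a ha))

theorem IsCup.isCut_middle (h : IsCup x y X Y Z) (hXY : IsLeftOf x X Y) (hYZ : IsLeftOf x Y Z) :
    IsCut x y Y X Z := by
  obtain ⟨l, c, hX, hY, hZ⟩ := h
  refine isCut_of_pencil (f := fun a => y a - (l * x a + c)) (h := fun _ => 1) (l := l) (w := 0)
    (fun _ _ => by ring) (fun _ _ => by ring) (fun _ _ => one_pos) (fun a ha z hz => ?_)
    fun a ha z hz => ?_
  · exact mul_neg_of_neg_of_pos (sub_neg.2 (hXY z hz a ha)) (by linarith [hY a ha, hX z hz])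
  · exact mul_pos (sub_pos.2 (hYZ a ha z hz)) (by linarith [hY a ha, hZ z hz])

theorem IsCup.isCut_right (h : IsCup x y X Y Z) (hXY : IsLeftOf x X Y) (hXZ : IsLeftOf x X Z)
    (hYZ : IsLeftOf x Y Z) : IsCut x y Z X Y := by
  classical
  obtain ⟨l, c, hX, hY, hZ⟩ := h
  have hX_YZ : IsLeftOf x X (Y ∪ Z) := fun a ha b hb =>
    (mem_union.1 hb).elim (hXY a ha b) (hXZ a ha b)
  obtain ⟨v, hvX, hv⟩ := hX_YZ.exists_between
  have hvY := fun a ha => sub_pos.2 (hv a (mem_union_left Z ha))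
  have hvZ := fun a ha => sub_pos.2 (hv a (mem_union_right Y ha))
  refine isCut_of_pencil (f := fun a => y a - (l * x a + c)) (h := fun a => x a - v) (l := l)
    (w := -1) (fun _ _ => by ring) (fun _ _ => by ring) hvZ (fun a ha z hz => ?_)
    fun a ha z hz => ?_
  · exact mul_neg_of_neg_of_pos (sub_neg.2 (hXZ z hz a ha)) <| sub_pos.2 <|
      (mul_neg_of_pos_of_neg (sub_pos.2 (hZ a ha)) (sub_neg.2 (hvX z hz))).trans
        (mul_pos (sub_pos.2 (hX z hz)) (hvZ a ha))
  · exact mul_pos_of_neg_of_neg (sub_neg.2 (hYZ z hz a ha)) <| sub_neg.2 <|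
      (mul_neg_of_neg_of_pos (sub_neg.2 (hY z hz)) (hvZ a ha)).trans
        (mul_pos (sub_pos.2 (hZ a ha)) (hvY z hz))

end Cuts

/-! ### The four blocks as seen from each other -/

section AvoidingClusters

variable {α 𝕜 : Type*} [Field 𝕜] [LinearOrder 𝕜] {x y : α → 𝕜} {X Y Z W : Finset α} {a b : α}
  {k s : ℕ}

/-- All points of `Y` lie on one side of the line through `a` and `b`, as far as this can be told
from slopes: for `x a < x b` and `Y` to the left or to the right of `a`, this is what it says. -/
def LineMisses (x y : α → 𝕜) (a b : α) (Y : Finset α) : Prop :=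
  (∀ z ∈ Y, chordSlope x y a z < chordSlope x y a b) ∨
    ∀ z ∈ Y, chordSlope x y a b < chordSlope x y a z

/-- The set `X` contains `k` disjoint clusters of more than `s` points each such that the lines
through points of different clusters all miss `Y`. -/
def HasAvoidingClusters (k s : ℕ) (x y : α → 𝕜) (X Y : Finset α) : Prop :=
  HasClusters k s x X fun a b => LineMisses x y a b Y

theorem IsCut.hasAvoidingClusters (hZ : Z.Nonempty) (hYZ : IsCut x y X Y Z)
    (hZW : IsCut x y X Z W) (hk : 1 ≤ k) (hX : 75 * k ^ 2 ≤ #X) (hXs : 1000 * k ^ 4 * s ≤ #X) :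
    HasAvoidingClusters k s x y X Y ∨
      HasAvoidingClusters k s x y X Z ∧ HasAvoidingClusters k s x y X W := by
  have hZW := hZW.chordSlope_lt
  obtain ⟨c, G, hc, hG⟩ := hYZ
  obtain ⟨z, hz⟩ := hZ
  refine (hasClusters_le_or_ge x G hk hX hXs).symm.imp (fun h => ?_) fun h => ⟨?_, ?_⟩
  · exact h.imp fun a ha b hb hab hGab => .inl fun y hy =>
      ((hc a ha).1 y hy).trans_le ((hG a ha b hb hab).2 hGab)
  · exact h.imp fun a ha b hb hab hGab => .inr fun z hz =>
      ((hG a ha b hb hab).1 hGab).trans_lt ((hc a ha).2 z hz)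
  · exact h.imp fun a ha b hb hab hGab => .inr fun w hw =>
      (((hG a ha b hb hab).1 hGab).trans_lt ((hc a ha).2 z hz)).trans (hZW a ha z hz w hw)

variable [IsStrictOrderedRing 𝕜]

theorem LineMisses.of_neg (h : LineMisses x (-y) a b Y) : LineMisses x y a b Y := by
  simpa only [LineMisses, chordSlope_neg, neg_lt_neg_iff] using h.symm

theorem LineMisses.of_smul {ε : ℤˣ} (h : LineMisses x (ε • y) a b Y) : LineMisses x y a b Y := by
  obtain rfl | rfl := Int.units_eq_one_or ε
  · simpa using h
  · exact .of_neg (by simpa using h)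

theorem HasAvoidingClusters.of_smul {ε : ℤˣ} (h : HasAvoidingClusters k s x (ε • y) X Y) :
    HasAvoidingClusters k s x y X Y :=
  h.imp fun _ _ _ _ _ => .of_smul

theorem IsCut.swap {ε : ℤˣ} (h : IsCut x (ε • y) X Y Z) : IsCut x (-ε • y) X Z Y :=
  .of_neg (by simpa using h)

theorem IsCut.sign_eq_of_trans (hX : X.Nonempty) (hY : Y.Nonempty) (hZ : Z.Nonempty)
    (hW : W.Nonempty) {σ τ : ℤˣ} (hYZ : IsCut x (σ • y) X Y Z) (hZW : IsCut x (σ • y) X Z W)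
    (hYW : IsCut x (τ • y) X Y W) : τ = σ := by
  by_contra h
  obtain rfl : τ = -σ := Int.units_ne_iff_eq_neg.1 h
  obtain ⟨⟨a, ha⟩, ⟨b, hb⟩⟩ := And.intro hX hY
  obtain ⟨⟨c, hc⟩, ⟨d, hd⟩⟩ := And.intro hZ hW
  have hWY : IsCut x (σ • y) X W Y := by simpa using hYW.swap
  have hbc := hYZ.chordSlope_lt a ha b hb c hc
  have hcd := hZW.chordSlope_lt a ha c hc d hd
  exact (hbc.trans hcd).not_gt (hWY.chordSlope_lt a ha d hd b hb)

theorem hasAvoidingClusters_of_extremal (hZ : Z.Nonempty) (hW : W.Nonempty) {σ τ : ℤˣ}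
    (hYZ : IsCut x (σ • y) X Y Z) (hYW : IsCut x (σ • y) X Y W) (hZW : IsCut x (τ • y) X Z W)
    (hk : 1 ≤ k) (hX : 75 * k ^ 2 ≤ #X) (hXs : 1000 * k ^ 4 * s ≤ #X) :
    HasAvoidingClusters k s x y X Y ∨
      HasAvoidingClusters k s x y X Z ∧ HasAvoidingClusters k s x y X W := by
  suffices HasAvoidingClusters k s x (σ • y) X Y ∨
      HasAvoidingClusters k s x (σ • y) X Z ∧ HasAvoidingClusters k s x (σ • y) X W from
    this.imp .of_smul fun h => ⟨.of_smul h.1, .of_smul h.2⟩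
  obtain rfl | h := eq_or_ne τ σ
  · exact hYZ.hasAvoidingClusters hZ hZW hk hX hXs
  · obtain rfl : τ = -σ := Int.units_ne_iff_eq_neg.1 h
    have hWZ : IsCut x (σ • y) X W Z := by simpa using hZW.swap
    exact (hYW.hasAvoidingClusters hW hWZ hk hX hXs).imp id And.symm

end AvoidingClusters

section FourBlocks

variable {α 𝕜 : Type*} [Field 𝕜] [LinearOrder 𝕜] {x y : α → 𝕜} {k s : ℕ}

/-- From each block of the triple `T`, a cut separates the other two, the left one of them being
seen below the right one. -/
def HasCuts (x y : α → 𝕜) (T : Fin 3 → Finset α) : Prop :=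
  IsCut x y (T 0) (T 1) (T 2) ∧ IsCut x y (T 1) (T 0) (T 2) ∧ IsCut x y (T 2) (T 0) (T 1)

variable [IsStrictOrderedRing 𝕜]

theorem IsBent.exists_hasCuts {T : Fin 3 → Finset α} (h : IsBent x y T)
    (hleft : ∀ i j, i < j → IsLeftOf x (T i) (T j)) : ∃ ε : ℤˣ, HasCuts x (ε • y) T := by
  obtain ⟨ε, hcup⟩ := h
  have h₀₁ := hleft 0 1 (by decide)
  have h₀₂ := hleft 0 2 (by decide)
  have h₁₂ := hleft 1 2 (by decide)
  exact ⟨ε, hcup.isCut_left h₀₁ h₀₂ h₁₂, hcup.isCut_middle h₀₁ h₁₂, hcup.isCut_right h₀₁ h₀₂ h₁₂⟩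

variable {S : Fin 4 → Finset α} {ε : Fin 4 → ℤˣ}

theorem signs_of_hasCuts (hne : ∀ i, (S i).Nonempty)
    (hcut : ∀ m : Fin 4, HasCuts x (ε m • y) (S ∘ m.succAbove)) :
    ε 3 = ε 2 ∧ ε 1 = ε 0 ∨ ε 2 = ε 1 ∧ ε 0 = -ε 3 := by
  have from₀ : ε 3 = ε 1 → ε 2 = ε 1 := fun h => IsCut.sign_eq_of_trans (hne 0) (hne 1) (hne 2)
    (hne 3) (h ▸ (hcut 3).1) (hcut 1).1 (hcut 2).1
  have from₁ : ε 3 = ε 0 → ε 2 = ε 0 := fun h => IsCut.sign_eq_of_trans (hne 1) (hne 0) (hne 2)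
    (hne 3) (h ▸ (hcut 3).2.1) (hcut 0).1 (hcut 2).2.1
  have from₂ : ε 3 = ε 0 → ε 1 = ε 0 := fun h => IsCut.sign_eq_of_trans (hne 2) (hne 0) (hne 1)
    (hne 3) (h ▸ (hcut 3).2.2) (hcut 0).2.1 (hcut 1).2.1
  have from₃ : ε 2 = ε 0 → ε 1 = ε 0 := fun h => IsCut.sign_eq_of_trans (hne 3) (hne 0) (hne 1)
    (hne 2) (h ▸ (hcut 2).2.2) (hcut 0).2.2 (hcut 1).2.2
  generalize ε 0 = ε₀, ε 1 = ε₁, ε 2 = ε₂, ε 3 = ε₃ at *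
  decide +revert

theorem exists_ne_and_of_matching {ι : Type*} {r : ι → ι → Prop} {a a' b b' : ι}
    (hnodup : [a, a', b, b'].Nodup) (ha : r a a' ∨ r a b ∧ r a b') (ha' : r a' a ∨ r a' b ∧ r a' b')
    (hb : r b b' ∨ r b a ∧ r b a') (hb' : r b' b ∨ r b' a ∧ r b' a') :
    ∃ i j, i ≠ j ∧ r i j ∧ r j i := by
  grind

theorem exists_pair_hasAvoidingClusters (hbent : ∀ m : Fin 4, IsBent x y (S ∘ m.succAbove))
    (hleft : ∀ i j, i < j → IsLeftOf x (S i) (S j)) (hk : 1 ≤ k) (hS : ∀ i, 75 * k ^ 2 ≤ #(S i))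
    (hSs : ∀ i, 1000 * k ^ 4 * s ≤ #(S i)) :
    ∃ i j, i ≠ j ∧ HasAvoidingClusters k s x y (S i) (S j) ∧
      HasAvoidingClusters k s x y (S j) (S i) := by
  choose ε hcut using fun m : Fin 4 => (hbent m).exists_hasCuts fun i j hij =>
    hleft _ _ (m.strictMono_succAbove hij)
  have hne : ∀ i, (S i).Nonempty := fun i =>
    card_pos.1 (lt_of_lt_of_le (by positivity) (hS i))
  have hext : ∀ {i j l m : Fin 4} {σ τ : ℤˣ}, IsCut x (σ • y) (S i) (S j) (S l) →
      IsCut x (σ • y) (S i) (S j) (S m) → IsCut x (τ • y) (S i) (S l) (S m) →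
      HasAvoidingClusters k s x y (S i) (S j) ∨ HasAvoidingClusters k s x y (S i) (S l) ∧
        HasAvoidingClusters k s x y (S i) (S m) := fun hjl hjm hlm =>
    hasAvoidingClusters_of_extremal (hne _) (hne _) hjl hjm hlm hk (hS _) (hSs _)
  obtain ⟨h₃₂, h₁₀⟩ | ⟨h₂₁, h₀₃⟩ := signs_of_hasCuts hne hcut
  · exact exists_ne_and_of_matching (a := 0) (a' := 1) (b := 2) (b' := 3) (by decide)
      (hext (hcut 3).1 (h₃₂ ▸ (hcut 2).1) (hcut 1).1)
      (hext (hcut 3).2.1 (h₃₂ ▸ (hcut 2).2.1) (hcut 0).1)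
      (hext (hcut 1).2.1.swap (h₁₀ ▸ (hcut 0).2.1.swap) (hcut 3).2.2)
      (hext (hcut 1).2.2.swap (h₁₀ ▸ (hcut 0).2.2.swap) (hcut 2).2.2)
  · exact exists_ne_and_of_matching (a := 0) (a' := 3) (b := 1) (b' := 2) (by decide)
      (hext (hcut 2).1.swap (h₂₁ ▸ (hcut 1).1.swap) (hcut 3).1)
      (hext (hcut 2).2.2 (h₂₁ ▸ (hcut 1).2.2) (hcut 0).2.2)
      (hext (hcut 3).2.1.swap (h₀₃ ▸ (hcut 0).1) (hcut 2).2.1)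
      (hext (hcut 3).2.2.swap (h₀₃ ▸ (hcut 0).2.1) (hcut 1).2.1)

theorem exists_mutually_avoiding_clusters {P : Finset α} (hx : Set.InjOn x P)
    (hline : ∀ l c, #{a ∈ P | y a = l * x a + c} ≤ 2) (hk : 1 ≤ k)
    (hP : 12 * (40 * k + 1) ^ 2 < #P) (hPs : 300000 * k ^ 4 * s ≤ #P) :
    ∃ X ⊆ P, ∃ Y ⊆ P, IsLeftOf x X Y ∧ HasAvoidingClusters k s x y X Y ∧
      HasAvoidingClusters k s x y Y X := by
  obtain ⟨S, hSP, hcard, hleft, hbent⟩ := exists_four_bent_blocks hx hline (by lia)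
  have hS : ∀ i, 75 * k ^ 2 ≤ #(S i) := fun i => by linarith [hcard i]
  have hSs : ∀ i, 1000 * k ^ 4 * s ≤ #(S i) := fun i => by
    have := hcard i
    lia
  obtain ⟨i, j, hij, hSij, hSji⟩ := exists_pair_hasAvoidingClusters hbent hleft hk hS hSs
  obtain hij | hij := hij.lt_or_gt
  · exact ⟨S i, hSP i, S j, hSP j, hleft i j hij, hSij, hSji⟩
  · exact ⟨S j, hSP j, S i, hSP i, hleft j i hij, hSji, hSij⟩

end FourBlocks

/-! ### Avoidance in the plane -/

section Avoidance

variable {𝕜 E : Type*} [Field 𝕜] [LinearOrder 𝕜] [IsStrictOrderedRing 𝕜] [AddCommGroup E]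
  [Module 𝕜 E] {a b : E}

theorem disjoint_affineSpan_pair_convexHull {f : E →ₗ[𝕜] 𝕜} (hab : f a = f b) {S : Set E}
    (hS : (∀ z ∈ S, f z < f a) ∨ ∀ z ∈ S, f a < f z) :
    Disjoint (affineSpan 𝕜 {a, b} : Set E) (convexHull 𝕜 S) := by
  have hspan : ∀ z ∈ affineSpan 𝕜 {a, b}, f z = f a := fun z hz => by
    obtain ⟨t, rfl⟩ := mem_affineSpan_pair_iff_exists_lineMap_eq.1 hz
    simp [AffineMap.lineMap_apply_module', hab]
  refine Set.disjoint_left.2 fun z hz hzS => ?_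
  obtain hS | hS := hS
  · have hlt : f z < f a := convexHull_min hS (convex_halfSpace_lt f.isLinear _) hzS
    exact hlt.ne (hspan z hz)
  · have hlt : f a < f z := convexHull_min hS (convex_halfSpace_gt f.isLinear _) hzS
    exact hlt.ne' (hspan z hz)

theorem LineMisses.disjoint_affineSpan_convexHull {x y : E →ₗ[𝕜] 𝕜} {Y : Finset E}
    (h : LineMisses x y a b Y) (hab : x a < x b)
    (hside : (∀ z ∈ Y, x z < x a) ∨ ∀ z ∈ Y, x a < x z) :
    Disjoint (affineSpan 𝕜 {a, b} : Set E) (convexHull 𝕜 (Y : Set E)) := by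
  have hab := sub_pos.2 hab
  let f : E →ₗ[𝕜] 𝕜 := (x b - x a) • y - (y b - y a) • x
  have hf : ∀ z, x z ≠ x a →
      f z - f a = (x b - x a) * (x z - x a) * (chordSlope x y a z - chordSlope x y a b) :=
    fun z hz => by
      have hz := sub_ne_zero.2 hz
      simp only [f, chordSlope, LinearMap.sub_apply, LinearMap.smul_apply, smul_eq_mul]
      field_simp
      ring
  refine disjoint_affineSpan_pair_convexHull (f := f) ?_ ?_
  · simp only [f, LinearMap.sub_apply, LinearMap.smul_apply, smul_eq_mul]
    ring
  obtain hside | hside := hside <;> obtain h | h := h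
  · refine .inr fun z hz => sub_pos.1 (hf z (hside z hz).ne ▸ ?_)
    exact mul_pos_of_neg_of_neg (mul_neg_of_pos_of_neg hab (sub_neg.2 (hside z hz)))
      (sub_neg.2 (h z hz))
  · refine .inl fun z hz => sub_neg.1 (hf z (hside z hz).ne ▸ ?_)
    exact mul_neg_of_neg_of_pos (mul_neg_of_pos_of_neg hab (sub_neg.2 (hside z hz)))
      (sub_pos.2 (h z hz))
  · refine .inl fun z hz => sub_neg.1 (hf z (hside z hz).ne' ▸ ?_)
    exact mul_neg_of_pos_of_neg (mul_pos hab (sub_pos.2 (hside z hz))) (sub_neg.2 (h z hz))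
  · refine .inr fun z hz => sub_pos.1 (hf z (hside z hz).ne' ▸ ?_)
    exact mul_pos (mul_pos hab (sub_pos.2 (hside z hz))) (sub_pos.2 (h z hz))

end Avoidance

theorem avoids2_of_lineMisses {x y : Plane →ₗ[ℝ] ℝ} {A B : Set Plane} {Y : Finset Plane}
    (hx : Set.InjOn x A) (hside : ∀ a ∈ A, (∀ z ∈ Y, x z < x a) ∨ ∀ z ∈ Y, x a < x z)
    (hmiss : ∀ a ∈ A, ∀ b ∈ A, x a < x b → LineMisses x y a b Y) (hB : B ⊆ Y) : Avoids2 A B := by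
  intro a ha b hb hab
  refine .mono_right (convexHull_mono hB) ?_
  obtain h | h := (hx.ne ha hb hab).lt_or_gt
  · exact (hmiss a ha b hb h).disjoint_affineSpan_convexHull h (hside a ha)
  · rw [Set.pair_comm]
    exact (hmiss b hb a ha h).disjoint_affineSpan_convexHull h (hside b hb)

theorem HasAvoidingClusters.exists_avoids2 {k s : ℕ} {x y : Plane →ₗ[ℝ] ℝ} {X Y : Finset Plane}
    (h : HasAvoidingClusters k s x y X Y) (hx : Set.InjOn x X)
    (hside : IsLeftOf x X Y ∨ IsLeftOf x Y X) :
    ∃ A : Fin k → Finset Plane, (∀ i, A i ⊆ X) ∧ (∀ i j, i ≠ j → Disjoint (A i) (A j)) ∧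
      (∀ i, s < #(A i)) ∧
      ∀ a : Fin k → Plane, (∀ i, a i ∈ A i) → ∀ B : Set Plane, B ⊆ Y → Avoids2 (Set.range a) B := by
  obtain ⟨A, hAX, hdisj, hcard, hmiss⟩ := h
  refine ⟨A, hAX, hdisj, hcard, fun a ha B hB => ?_⟩
  have haX : Set.range a ⊆ X := Set.range_subset_iff.2 fun i => hAX i (ha i)
  refine avoids2_of_lineMisses (y := y) (hx.mono haX) (fun p hp => ?_) ?_ hB
  · exact hside.symm.imp (fun h z hz => h z hz p (haX hp)) fun h z hz => h p (haX hp) z hz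
  · rintro _ ⟨i, rfl⟩ _ ⟨j, rfl⟩ hlt
    exact hmiss i j (fun hij => hlt.ne (by rw [hij])) _ (ha i) _ (ha j) hlt

/-! ### Coordinates adapted to a point set in general position -/

section Coordinates

open Module

variable {K V : Type*} [Field K] [AddCommGroup V] [Module K V]

theorem exists_dual_injOn [Infinite K] (P : Finset V) : ∃ x : Dual K V, Set.InjOn x P := by
  classical
  obtain ⟨x, hx⟩ := exists_dual_forall_apply_ne_zero (K := K)
    (fun p : P.offDiag => p.1.1 - p.1.2) fun p => sub_ne_zero.2 (mem_offDiag.1 p.2).2.2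
  refine ⟨x, fun a ha b hb hab => by_contra fun hne => ?_⟩
  exact hx ⟨(a, b), mem_offDiag.2 ⟨ha, hb, hne⟩⟩ (by rw [map_sub, hab, sub_self])

theorem exists_dual_notMem_span_singleton (hV : 1 < finrank K V) (x : Dual K V) :
    ∃ y : Dual K V, y ∉ K ∙ x := by
  refine SetLike.exists_not_mem_of_ne_top _ fun htop => hV.not_ge ?_
  rw [← Subspace.dual_finrank_eq, ← finrank_top K (Dual K V), ← htop]
  exact (finrank_span_le_card {x}).trans (by simp)

theorem collinear_of_dual_eq (hV : finrank K V = 2) {f : Dual K V} (hf : f ≠ 0) {c : K} {S : Set V}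
    (hS : ∀ p ∈ S, f p = c) : Collinear K S := by
  have : FiniteDimensional K V := .of_finrank_pos (by lia)
  have hker : vectorSpan K S ≤ f.ker := by
    rw [vectorSpan_def, Submodule.span_le]
    rintro _ ⟨p, hp, q, hq, rfl⟩
    simp [hS p hp, hS q hq]
  rw [collinear_iff_finrank_le_one]
  have := Dual.finrank_ker_add_one_of_ne_zero hf
  exact (Submodule.finrank_mono hker).trans (by lia)

end Coordinates

theorem GenPos2.exists_coordinates {P : Finset Plane} (hP : GenPos2 P) :
    ∃ x y : Plane →ₗ[ℝ] ℝ, Set.InjOn x P ∧ ∀ l c, #{a ∈ P | y a = l * x a + c} ≤ 2 := by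
  have hdim : Module.finrank ℝ Plane = 2 := finrank_euclideanSpace_fin
  obtain ⟨x, hx⟩ := exists_dual_injOn (K := ℝ) P
  obtain ⟨y, hy⟩ := exists_dual_notMem_span_singleton (by rw [hdim]; exact one_lt_two) x
  refine ⟨x, y, hx, fun l c => not_lt.1 fun hlt => ?_⟩
  obtain ⟨a, b, d, ha, hb, hd, hab, had, hbd⟩ := two_lt_card_iff.1 hlt
  rw [mem_filter] at ha hb hd
  have hne : y - l • x ≠ 0 := fun h =>
    hy (Submodule.mem_span_singleton.2 ⟨l, (sub_eq_zero.1 h).symm⟩)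
  refine hP a ha.1 b hb.1 d hd.1 hab had hbd (collinear_of_dual_eq hdim hne (c := c) ?_)
  simp [ha.2, hb.2, hd.2]

/-- Positive fraction mutually avoiding sets theorem in the plane. -/
theorem fractional_mutually_avoiding (k : ℕ) (hk : 1 ≤ k) (P : Finset Plane) (n : ℕ)
    (hn : P.card = n) (hgp : GenPos2 (P : Set Plane))
    (hbig : 12 * (40 * k + 1) ^ 2 < n) :
    ∃ A B : Fin k → Finset Plane,
      (∀ i, A i ⊆ P) ∧ (∀ i, B i ⊆ P) ∧
      (∀ i j, i ≠ j → Disjoint (A i) (A j)) ∧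
      (∀ i j, i ≠ j → Disjoint (B i) (B j)) ∧
      (∀ i j, Disjoint (A i) (B j)) ∧
      (∀ i, (n : ℝ) / (1320 * (k : ℝ)) ^ 4 ≤ (A i).card) ∧
      (∀ i, (n : ℝ) / (1320 * (k : ℝ)) ^ 4 ≤ (B i).card) ∧
      (∀ a b : Fin k → Plane, (∀ i, a i ∈ A i) → (∀ i, b i ∈ B i) →
        MutuallyAvoiding2 (Set.range a) (Set.range b)) := by
  obtain ⟨x, y, hx, hline⟩ := hgp.exists_coordinates
  set s := n / (1320 * k) ^ 4
  have hPs : 300000 * k ^ 4 * s ≤ #P := calc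
    300000 * k ^ 4 * s ≤ (1320 * k) ^ 4 * s := by rw [mul_pow]; gcongr; norm_num
    _ ≤ #P := hn ▸ Nat.mul_div_le n _
  have hcard : ∀ A : Finset Plane, s < #A → (n : ℝ) / (1320 * (k : ℝ)) ^ 4 ≤ #A := fun A hA => by
    rw [div_le_iff₀ (by positivity)]
    exact_mod_cast (Nat.lt_mul_of_div_lt hA (by positivity)).le
  obtain ⟨X, hXP, Y, hYP, hXY, hXav, hYav⟩ :=
    exists_mutually_avoiding_clusters hx hline hk (hn ▸ hbig) hPs
  obtain ⟨A, hAX, hAdisj, hAcard, hAav⟩ := hXav.exists_avoids2 (hx.mono hXP) (.inl hXY)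
  obtain ⟨B, hBY, hBdisj, hBcard, hBav⟩ := hYav.exists_avoids2 (hx.mono hYP) (.inr hXY)
  refine ⟨A, B, fun i => (hAX i).trans hXP, fun i => (hBY i).trans hYP, hAdisj, hBdisj,
    fun i j => ?_, fun i => hcard _ (hAcard i), fun i => hcard _ (hBcard i),
    fun a b ha hb => ⟨?_, ?_⟩⟩
  · exact disjoint_left.2 fun z hzA hzB => (hXY z (hAX i hzA) z (hBY j hzB)).false
  · exact hAav a ha _ (Set.range_subset_iff.2 fun i => hBY i (hb i))
  · exact hBav b hb _ (Set.range_subset_iff.2 fun i => hAX i (ha i))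
end
end

section
/- Let k ≥ 1 be an integer and let n > 0 be a real number. Let α₁ ≤ α₂ ≤ … ≤ α_{10k} and β₁ ≤ β₂ ≤ … ≤ β_{10k} be nonnegative real numbers such that the total sum Σ_{i=1}^{10k} (α_i + β_i) ≤ n and such that Π_{i=1}^{10k} α_i β_i ≥ n^{20k} / (430k)^{47k}. Then there exists an index i with 1 ≤ i ≤ 9k such that α_i ≥ n/(1320k)⁴ and β_i ≥ n/(1320k)⁴. -/
/-!
If `α` stays below `T = n / (1320 k) ^ 4` on some `9 k` indices, those entries contribute at most
`T ^ (9 k)` to `∏ α i * β i`. The remaining `k` entries of `α` and all `10 k` entries of `β` are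
`11 k` nonnegative numbers with sum at most `n`, so by AM-GM they contribute at most
`(n / (11 k)) ^ (11 k)`. Since `430 ^ 47 < 1320 ^ 36 * 11 ^ 11`, the product is then too small.
Hence `α`, and by symmetry `β`, reaches `T` among its first `9 k` entries, and by monotonicity both
do so at the last of these.
-/

open Finset

section AMGM

variable {ι : Type*}

theorem prod_le_sum_div_card_pow (s : Finset ι) {f : ι → ℝ} (hf : ∀ i ∈ s, 0 ≤ f i) :
    ∏ i ∈ s, f i ≤ ((∑ i ∈ s, f i) / #s) ^ #s := by
  obtain rfl | hs := s.eq_empty_or_nonempty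
  · simp
  have amgm : (∏ i ∈ s, f i) ^ (#s : ℝ)⁻¹ ≤ (∑ i ∈ s, f i) / #s := by
    simpa using Real.geom_mean_le_arith_mean s (fun _ ↦ 1) f (by simp) (by simpa using hs) hf
  calc ∏ i ∈ s, f i = ((∏ i ∈ s, f i) ^ (#s : ℝ)⁻¹) ^ #s :=
        (Real.rpow_inv_natCast_pow (prod_nonneg hf) hs.card_ne_zero).symm
    _ ≤ ((∑ i ∈ s, f i) / #s) ^ #s :=
        pow_le_pow_left₀ (Real.rpow_nonneg (prod_nonneg hf) _) amgm _

theorem prod_mul_prod_le_sum_add_sum_div_card_pow {κ : Type*} (s : Finset ι) (t : Finset κ)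
    {f : ι → ℝ} {g : κ → ℝ} (hf : ∀ i ∈ s, 0 ≤ f i) (hg : ∀ j ∈ t, 0 ≤ g j) :
    (∏ i ∈ s, f i) * ∏ j ∈ t, g j ≤
      ((∑ i ∈ s, f i + ∑ j ∈ t, g j) / (#s + #t : ℕ)) ^ (#s + #t) := by
  have hfg : ∀ x ∈ s.disjSum t, 0 ≤ Sum.elim f g x := by
    rintro (i | j) hx
    · exact hf i (inl_mem_disjSum.mp hx)
    · exact hg j (inr_mem_disjSum.mp hx)
  simpa only [prod_disjSum, sum_disjSum, card_disjSum, Sum.elim_inl, Sum.elim_inr]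
    using prod_le_sum_div_card_pow (s.disjSum t) hfg

end AMGM

section SmallEntries

variable {ι : Type*} [Fintype ι] {s : Finset ι} {α β : ι → ℝ} {n : ℝ}

theorem prod_mul_le_of_forall_mem_le [DecidableEq ι] {T : ℝ}
    (hα0 : ∀ i, 0 ≤ α i) (hβ0 : ∀ i, 0 ≤ β i)
    (hsum : ∑ i, (α i + β i) ≤ n) (hs : ∀ i ∈ s, α i ≤ T) :
    ∏ i, α i * β i ≤ T ^ #s * (n / (#sᶜ + Fintype.card ι : ℕ)) ^ (#sᶜ + Fintype.card ι) := by
  have small : ∏ i ∈ s, α i ≤ T ^ #s :=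
    (prod_le_prod (fun i _ ↦ hα0 i) hs).trans_eq (prod_const T)
  have sum_rest : ∑ i ∈ sᶜ, α i + ∑ i, β i ≤ n := calc
    ∑ i ∈ sᶜ, α i + ∑ i, β i ≤ ∑ i, α i + ∑ i, β i := by
      gcongr
      exacts [fun i _ _ ↦ hα0 i, subset_univ _]
    _ ≤ n := by rwa [← sum_add_distrib]
  have sum_rest_nonneg : 0 ≤ ∑ i ∈ sᶜ, α i + ∑ i, β i :=
    add_nonneg (sum_nonneg fun i _ ↦ hα0 i) (sum_nonneg fun i _ ↦ hβ0 i)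
  have rest : (∏ i ∈ sᶜ, α i) * ∏ i, β i ≤
      (n / (#sᶜ + Fintype.card ι : ℕ)) ^ (#sᶜ + Fintype.card ι) := calc
    (∏ i ∈ sᶜ, α i) * ∏ i, β i
        ≤ ((∑ i ∈ sᶜ, α i + ∑ i, β i) / (#sᶜ + Fintype.card ι : ℕ)) ^ (#sᶜ + Fintype.card ι) :=
      prod_mul_prod_le_sum_add_sum_div_card_pow sᶜ univ (fun i _ ↦ hα0 i) (fun i _ ↦ hβ0 i)
    _ ≤ (n / (#sᶜ + Fintype.card ι : ℕ)) ^ (#sᶜ + Fintype.card ι) := by gcongr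
  calc ∏ i, α i * β i = (∏ i ∈ s, α i) * ((∏ i ∈ sᶜ, α i) * ∏ i, β i) := by
        rw [prod_mul_distrib, ← prod_mul_prod_compl s α, mul_assoc]
    _ ≤ T ^ #s * (n / (#sᶜ + Fintype.card ι : ℕ)) ^ (#sᶜ + Fintype.card ι) :=
        mul_le_mul small rest
          (mul_nonneg (prod_nonneg fun i _ ↦ hα0 i) (prod_nonneg fun i _ ↦ hβ0 i))
          ((prod_nonneg fun i _ ↦ hα0 i).trans small)

theorem threshold_pow_mul_mean_pow_lt {x : ℝ} (hn : 0 < n) (hx : 0 < x) :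
    (n / (1320 * x) ^ 4) ^ 9 * (n / (11 * x)) ^ 11 < n ^ 20 / (430 * x) ^ 47 := by
  have constants : (430 : ℝ) ^ 47 < 1320 ^ 36 * 11 ^ 11 := by norm_num
  calc (n / (1320 * x) ^ 4) ^ 9 * (n / (11 * x)) ^ 11
      = n ^ 20 / (1320 ^ 36 * 11 ^ 11 * x ^ 47) := by field_simp
    _ < n ^ 20 / (430 ^ 47 * x ^ 47) := by gcongr
    _ = n ^ 20 / (430 * x) ^ 47 := by rw [mul_pow]

theorem exists_mem_threshold_le {k : ℕ} (hk : 1 ≤ k) (hn : 0 < n)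
    (hι : Fintype.card ι = 10 * k) (hs : #s = 9 * k)
    (hα0 : ∀ i, 0 ≤ α i) (hβ0 : ∀ i, 0 ≤ β i) (hsum : ∑ i, (α i + β i) ≤ n)
    (hprod : n ^ (20 * k) / (430 * (k : ℝ)) ^ (47 * k) ≤ ∏ i, α i * β i) :
    ∃ i ∈ s, n / (1320 * (k : ℝ)) ^ 4 ≤ α i := by
  classical
  by_contra! hlt
  have hk0 : (0 : ℝ) < k := by exact_mod_cast hk
  have hrest : #sᶜ + Fintype.card ι = 11 * k := by rw [card_compl]; lia
  refine hprod.not_gt ?_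
  calc ∏ i, α i * β i
      ≤ (n / (1320 * (k : ℝ)) ^ 4) ^ (9 * k) * (n / (11 * (k : ℝ))) ^ (11 * k) := by
        simpa only [hs, hrest, Nat.cast_mul, Nat.cast_ofNat] using
          prod_mul_le_of_forall_mem_le hα0 hβ0 hsum fun i hi ↦ (hlt i hi).le
    _ = ((n / (1320 * (k : ℝ)) ^ 4) ^ 9 * (n / (11 * (k : ℝ))) ^ 11) ^ k := by
        rw [pow_mul _ 9, pow_mul _ 11, ← mul_pow]
    _ < (n ^ 20 / (430 * (k : ℝ)) ^ 47) ^ k :=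
        pow_lt_pow_left₀ (threshold_pow_mul_mean_pow_lt hn hk0) (by positivity) (by lia)
    _ = n ^ (20 * k) / (430 * (k : ℝ)) ^ (47 * k) := by rw [div_pow, ← pow_mul, ← pow_mul]

end SmallEntries

/-- The key numerical claim (Claim 2.3) from the proof of the fractional mutually
avoiding sets theorem. -/
theorem numerical_claim (k : ℕ) (hk : 1 ≤ k) (n : ℝ) (hn : 0 < n)
    (α β : Fin (10 * k) → ℝ)
    (hα0 : ∀ i, 0 ≤ α i) (hβ0 : ∀ i, 0 ≤ β i)
    (hαmono : Monotone α) (hβmono : Monotone β)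
    (hsum : ∑ i, (α i + β i) ≤ n)
    (hprod : n ^ (20 * k) / (430 * (k : ℝ)) ^ (47 * k) ≤ ∏ i, α i * β i) :
    ∃ i : Fin (10 * k), (i : ℕ) < 9 * k ∧
      n / (1320 * (k : ℝ)) ^ 4 ≤ α i ∧ n / (1320 * (k : ℝ)) ^ 4 ≤ β i := by
  let m : Fin (10 * k) := ⟨9 * k - 1, by lia⟩
  have hcard : #(Iic m) = 9 * k := by rw [Fin.card_Iic]; exact Nat.sub_add_cancel (by lia)
  obtain ⟨i, hi, hαi⟩ :=
    exists_mem_threshold_le hk hn (Fintype.card_fin _) hcard hα0 hβ0 hsum hprod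
  obtain ⟨j, hj, hβj⟩ :=
    exists_mem_threshold_le hk hn (Fintype.card_fin _) hcard hβ0 hα0
      (by simpa only [add_comm] using hsum) (by simpa only [mul_comm (β _)] using hprod)
  exact ⟨m, Nat.sub_lt (by lia) one_pos,
    hαi.trans (hαmono (mem_Iic.mp hi)), hβj.trans (hβmono (mem_Iic.mp hj))⟩
end
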